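/- Suppose (A_i)_{i∈I} and (B_i)_{i∈I} are families of C*-algebras such that A_i ⊆ B_i is relatively weakly injective for each i ∈ I. Then for any ultrafilter U on I, the inclusion ∏_U A_i ⊆ ∏_U B_i is also relatively weakly injective. -/

import Mathlib

/-!
Relative weak injectivity is rewritten as an extension property for families of functionals.

Let `f` be a state on a C*-algebra on which commuting representations `p` of `A` and `C` live. For
formal products `s = v d`, `t = w c` of unitaries `v, w` of `C` with elements `d, c` of `C`, the
functionals `γ (s, t) a = f (p(a ⊗ s* t))` form a *kernel*: they are hermitian and completely
positive, and `γ (v d, v c)` does not depend on `v`. A table `Pairing` records exactly the latter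
coincidences. Conversely, a kernel over `B` extending `γ` gives back a pair of commuting
representations of `B` and `C` (`pair_of_kernel`): on its GNS space, unitaries of `C` act by
isometries because `γ (v d, v c) = γ (d, c)`, and unitaries span `C`. Hence it suffices to extend
kernels from `A` to `B` (`rwi_of_extend`). The remaining relations among the vectors, such as
linearity in `d`, concern only the values of the kernel at scalars, which the extension preserves.

This property passes to ultraproducts, since it is of a finitary nature:

* Over a finite set of directions, kernels extend along a relatively weakly injective inclusion
  (`fin_extend`). Representing the kernel by vectors in a GNS space of `A`, the independence of
  `v` provides partial isometries in the commutant of `A` that carry the directions `v₀ d` to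
  `v d`; relative weak injectivity extends the vector functional from the tensor product of `A`
  with the commutant of a matrix amplification (`extend_centralizer`).
* By duality, this says that the cones `InK` of push-forwards of positive matrices over `A i` and
  `B i` are compatible. Elements of these cones are given by roots, whose norms are controlled by
  the element, so that roots can be lifted to the factors and passed to the limit along the ultrafilter.
  As a result, a kernel over the ultraproduct of the `A i` is nonnegative on the cone of the
  ultraproduct of the `B i` (`kpair_nonneg_of_ultra`).
* The M. Riesz extension theorem, applied to the union of the cones of all finite sets of
  directions, extends the kernel to all directions at once (`inf_extend`).
-/

open scoped TensorProduct
open Filter Topology Function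

noncomputable section

/-- A pair of commuting unital *-representations of `A` and `B` on a common C*-algebra;
these correspond exactly to the *-homomorphisms of the algebraic tensor product
`A ⊗[ℂ] B` into C*-algebras. -/
structure CommutingRepPair (A B : Type) [CStarAlgebra A] [CStarAlgebra B] : Type 1 where
  carrier : Type
  [inst : CStarAlgebra carrier]
  fst : A →⋆ₐ[ℂ] carrier
  snd : B →⋆ₐ[ℂ] carrier
  commutes : ∀ a b, Commute (fst a) (snd b)

attribute [instance] CommutingRepPair.inst

/-- The *-homomorphism `A ⊗[ℂ] B → C` induced by a commuting pair of representations. -/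
def CommutingRepPair.hom {A B : Type} [CStarAlgebra A] [CStarAlgebra B]
    (p : CommutingRepPair A B) : A ⊗[ℂ] B →ₐ[ℂ] p.carrier :=
  Algebra.TensorProduct.lift p.fst.toAlgHom p.snd.toAlgHom p.commutes

/-- The maximal tensor norm on `A ⊗[ℂ] B`: the supremum of `‖π x‖` over all
*-homomorphisms `π` of the algebraic tensor product into a C*-algebra, equivalently over
all pairs of commuting unital *-representations of `A` and `B`. -/
def maxNorm (A B : Type) [CStarAlgebra A] [CStarAlgebra B] (x : A ⊗[ℂ] B) : ℝ :=
  sSup {r : ℝ | ∃ p : CommutingRepPair A B, r = ‖p.hom x‖}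

/-- A family of elements of C*-algebras is (uniformly norm-)bounded. -/
def Bdd {I : Type} {A : I → Type} [∀ i, CStarAlgebra (A i)] (f : ∀ i, A i) : Prop :=
  ∃ M : ℝ, ∀ i, ‖f i‖ ≤ M

/-- `π : (∀ i, A i) → B` realizes `B` as the C*-algebra ultraproduct `∏_U A_i`, i.e. as
the quotient of the ℓ∞-product of the `A i` by the ideal of bounded families whose norms
tend to `0` along `U`:  `π` is a unital *-homomorphism on bounded families, every element
of `B` lifts to a bounded family (with control of norms), and the norm of `π f` is the
`U`-limit of the norms `‖f i‖`.  This data determines `B` uniquely up to isometric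
*-isomorphism. -/
structure IsCStarUltraproduct {I : Type} (U : Ultrafilter I) (A : I → Type)
    [∀ i, CStarAlgebra (A i)] (B : Type) [CStarAlgebra B]
    (π : (∀ i, A i) → B) : Prop where
  map_one : π 1 = 1
  map_add : ∀ f g, Bdd f → Bdd g → π (f + g) = π f + π g
  map_mul : ∀ f g, Bdd f → Bdd g → π (f * g) = π f * π g
  map_star : ∀ f, Bdd f → π (star f) = star (π f)
  map_smul : ∀ (c : ℂ) f, Bdd f → π (c • f) = c • π f
  norm_eq : ∀ f, Bdd f → Tendsto (fun i => ‖f i‖) (U : Filter I) (nhds ‖π f‖)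
  surj : ∀ b : B, ∃ f, (∀ i, ‖f i‖ ≤ ‖b‖) ∧ π f = b

/-- The inclusion of `A` into `B` given by the injective *-homomorphism `j` is
relatively weakly injective: for every C*-algebra `C`, the canonical map
`A ⊗_max C → B ⊗_max C` is isometric. -/
def RWI {A B : Type} [CStarAlgebra A] [CStarAlgebra B] (j : A →⋆ₐ[ℂ] B) : Prop :=
  ∀ (C : Type) [CStarAlgebra C], ∀ x : A ⊗[ℂ] C,
    maxNorm B C (Algebra.TensorProduct.map j.toAlgHom (AlgHom.id ℂ C) x) = maxNorm A C x

/-! ### C*-algebra preliminaries -/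

section CStarFacts
variable {A : Type} [CStarAlgebra A]

theorem exists_star_mul_self_norm_sq (a : A) :
    ∃ c : A, star c * c = (‖a‖ ^ 2 : ℝ) • (1 : A) - star a * a := by
  let _ := CStarAlgebra.spectralOrder A
  have _ := CStarAlgebra.spectralOrderedRing A
  have h := CStarAlgebra.star_mul_le_algebraMap_norm_sq (a := a)
  obtain ⟨c, hc⟩ := CStarAlgebra.nonneg_iff_eq_star_mul_self.1 (sub_nonneg.2 h)
  exact ⟨c, by rw [← hc, Algebra.algebraMap_eq_smul_one]⟩

theorem exists_sq_of_norm_sub_le {X : A} (hX : star X = X) {M : ℝ}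
    (h : ‖(M : ℝ) • (1 : A) - X‖ ≤ M) : ∃ c : A, X = star c * c := by
  let _ := CStarAlgebra.spectralOrder A
  have _ := CStarAlgebra.spectralOrderedRing A
  have hs : IsSelfAdjoint ((M : ℝ) • (1 : A) - X) := by
    simp [IsSelfAdjoint, hX, star_smul]
  have h1 := hs.le_algebraMap_norm_self
  have h2 : algebraMap ℝ A ‖(M : ℝ) • (1 : A) - X‖ ≤ algebraMap ℝ A M :=
    algebraMap_mono A h
  have h3 := h1.trans h2
  rw [Algebra.algebraMap_eq_smul_one, sub_le_self_iff] at h3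
  exact CStarAlgebra.nonneg_iff_eq_star_mul_self.1 h3

theorem norm_smul_one_sub_sq_le (c : A) {M : ℝ} (h : ‖star c * c‖ ≤ M) :
    ‖(M : ℝ) • (1 : A) - star c * c‖ ≤ M := by
  let _ := CStarAlgebra.spectralOrder A
  have _ := CStarAlgebra.spectralOrderedRing A
  have hM : 0 ≤ M := (norm_nonneg _).trans h
  have hs : IsSelfAdjoint (star c * c) := by simp [IsSelfAdjoint]
  have h1 : star c * c ≤ algebraMap ℝ A M :=
    hs.le_algebraMap_norm_self.trans (algebraMap_mono A h)
  rw [CStarAlgebra.norm_le_iff_le_algebraMap _ hM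
    (by rw [← Algebra.algebraMap_eq_smul_one]; exact sub_nonneg.2 h1)]
  rw [← Algebra.algebraMap_eq_smul_one]
  exact sub_le_self _ (star_mul_self_nonneg c)

/-- The terms of a sum of squares are bounded by the norm of the sum. -/
theorem norm_sq_le_of_sum {κ : Type} (F : Finset κ) (c : κ → A) {k : κ} (hk : k ∈ F) :
    ‖c k‖ ^ 2 ≤ ‖∑ l ∈ F, star (c l) * c l‖ := by
  let _ := CStarAlgebra.spectralOrder A
  have _ := CStarAlgebra.spectralOrderedRing A
  rw [sq, ← CStarRing.norm_star_mul_self]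
  exact CStarAlgebra.norm_le_norm_of_nonneg_of_le (star_mul_self_nonneg _)
    (Finset.single_le_sum (f := fun l => star (c l) * c l)
      (fun l _ => star_mul_self_nonneg (c l)) hk)

end CStarFacts

/-! ### Extension and separation for cones -/

section Cones
variable {E : Type} [AddCommGroup E] [Module ℝ E]

/-- M. Riesz extension along a linear map `ι` that need not be injective. -/
theorem riesz_along {E₁ : Type} [AddCommGroup E₁] [Module ℝ E₁]
    (ι : E₁ →ₗ[ℝ] E) (f : E₁ →ₗ[ℝ] ℝ) (K : PointedCone ℝ E)
    (hpos : ∀ x, ι x ∈ K → 0 ≤ f x) (hden : ∀ y, ∃ x, ι x + y ∈ K) :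
    ∃ g : E →ₗ[ℝ] ℝ, (∀ x, g (ι x) = f x) ∧ ∀ y ∈ K, 0 ≤ g y := by
  have hker : ∀ x, ι x = 0 → f x = 0 := by
    intro x hx
    have h1 := hpos x (by rw [hx]; exact zero_mem K)
    have h2 := hpos (-x) (by rw [map_neg, hx, neg_zero]; exact zero_mem K)
    rw [map_neg] at h2
    linarith
  have hle : LinearMap.ker ι.rangeRestrict ≤ LinearMap.ker f := by
    intro x hx
    rw [LinearMap.ker_rangeRestrict] at hx
    exact hker x hx
  obtain ⟨f', hf'⟩ : ∃ f' : LinearMap.range ι →ₗ[ℝ] ℝ, ∀ x, f' (ι.rangeRestrict x) = f x := by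
    obtain ⟨s, hs⟩ := LinearMap.exists_rightInverse_of_surjective ι.rangeRestrict
      (LinearMap.range_rangeRestrict ι)
    refine ⟨f ∘ₗ s, fun x => ?_⟩
    have : ι.rangeRestrict (s (ι.rangeRestrict x) - x) = 0 := by
      rw [map_sub, ← LinearMap.comp_apply, hs]; simp
    have := hle this
    simpa [sub_eq_zero] using this
  obtain ⟨g, hg, hgK⟩ := riesz_extension K ⟨LinearMap.range ι, f'⟩
    (by
      rintro ⟨_, x, rfl⟩ hx
      have := hpos x hx
      rw [← hf' x] at this
      exact this)
    (fun y => by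
      obtain ⟨x, hx⟩ := hden y
      exact ⟨ι.rangeRestrict x, hx⟩)
  exact ⟨g, fun x => (hg (ι.rangeRestrict x)).trans (hf' x), hgK⟩

/-- A point outside a cone with order unit `u` is separated from it by a functional that is
normalized at `u`. No closedness is needed, as the functional may vanish at the point. -/
theorem cone_separation (K : PointedCone ℝ E) (u z : E) (hu : u ∈ K)
    (hden : ∀ y, ∃ t : ℝ, t • u + y ∈ K) (hz : z ∉ K) :
    ∃ g : E →ₗ[ℝ] ℝ, (∀ y ∈ K, 0 ≤ g y) ∧ g u = 1 ∧ g z ≤ 0 := by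
  have smulK : ∀ (c : ℝ), 0 ≤ c → ∀ y ∈ K, c • y ∈ K := fun c hc y hy =>
    K.smul_mem hc hy
  have hneg : -u ∉ K := by
    intro hn
    apply hz
    obtain ⟨t, ht⟩ := hden z
    rcases le_total 0 t with h | h
    · have := K.add_mem ht (smulK t h _ hn)
      simpa using this
    · have := K.add_mem ht (smulK (-t) (by linarith) _ hu)
      simpa using this
  -- adjoining `-z` to the cone makes an extension of `t • u ↦ t` nonpositive at `z`
  let K' : PointedCone ℝ E := K ⊔ Submodule.span _ {-z}
  have hK' : ∀ y, y ∈ K' ↔ ∃ p ∈ K, ∃ s : ℝ, 0 ≤ s ∧ p - s • z = y := by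
    intro y
    simp only [K', Submodule.mem_sup, Submodule.mem_span_singleton]
    constructor
    · rintro ⟨p, hp, _, ⟨s, rfl⟩, rfl⟩
      refine ⟨p, hp, s.1, s.2, ?_⟩
      rw [sub_eq_add_neg, ← smul_neg]; rfl
    · rintro ⟨p, hp, s, hs, rfl⟩
      refine ⟨p, hp, _, ⟨⟨s, hs⟩, rfl⟩, ?_⟩
      rw [sub_eq_add_neg, ← smul_neg]; rfl
  obtain ⟨g, hg, hgK⟩ := riesz_along (LinearMap.toSpanSingleton ℝ E u) LinearMap.id K'
    (by
      intro t ht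
      obtain ⟨p, hp, s, hs, h⟩ := (hK' _).1 ht
      simp only [LinearMap.toSpanSingleton_apply] at h
      by_contra hlt
      simp only [LinearMap.id_apply, not_le] at hlt
      rcases hs.eq_or_lt with rfl | hs
      · apply hneg
        have : -u = (-t)⁻¹ • (p : E) := by
          rw [zero_smul, sub_zero] at h
          rw [h, smul_smul, inv_neg, neg_mul, inv_mul_cancel₀ hlt.ne, neg_one_smul]
        rw [this]
        exact smulK _ (by rw [inv_nonneg]; linarith) _ hp
      · apply hz
        have : z = s⁻¹ • (p + (-t) • u) := by
          rw [neg_smul, ← h]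
          simp [smul_smul, hs.ne']
        rw [this]
        exact smulK _ (by positivity) _ (K.add_mem hp (smulK _ (by linarith) _ hu)))
    (by
      intro y
      obtain ⟨t, ht⟩ := hden y
      exact ⟨t, (hK' _).2 ⟨_, ht, 0, le_rfl, by simp⟩⟩)
  refine ⟨g, fun y hy => hgK y ((hK' _).2 ⟨y, hy, 0, le_rfl, by simp⟩), ?_, ?_⟩
  · simpa using hg 1
  · have := hgK (-z) ((hK' _).2 ⟨0, zero_mem K, 1, zero_le_one, by simp⟩)
    rw [map_neg] at this
    linarith

end Cones

/-! ### The Gelfand–Naimark–Segal construction for operator-valued kernels -/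

/-- A unital *-representation of `A` on a Hilbert space. -/
structure HilbRep (A : Type) [CStarAlgebra A] : Type 1 where
  H : Type
  [normed : NormedAddCommGroup H]
  [innerSp : InnerProductSpace ℂ H]
  [complete : CompleteSpace H]
  π : A →⋆ₐ[ℂ] (H →L[ℂ] H)

attribute [instance] HilbRep.normed HilbRep.innerSp HilbRep.complete

section GNS
variable {A : Type} [CStarAlgebra A]

/-- GNS for a semi-inner product space `X` on which `A` acts by adjointable operators; these are
automatically bounded because `‖a‖² - a*a` is a square. -/
theorem gns_exists {X : Type} [AddCommGroup X] [Module ℂ X]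
    (c : PreInnerProductSpace.Core ℂ X) (ρ : A →ₐ[ℂ] Module.End ℂ X)
    (hρ : ∀ a x y, c.inner (ρ (star a) x) y = c.inner x (ρ a y)) :
    ∃ (R : HilbRep A) (Λ : X →ₗ[ℂ] R.H), DenseRange Λ ∧
      (∀ x y, inner ℂ (Λ x) (Λ y) = c.inner x y) ∧ ∀ a x, R.π a (Λ x) = Λ (ρ a x) := by
  let _ : SeminormedAddCommGroup X := InnerProductSpace.Core.toSeminormedAddCommGroup (c := c)
  let _ : InnerProductSpace ℂ X := InnerProductSpace.ofCore c
  have hin : ∀ x y : X, inner ℂ x y = c.inner x y := fun _ _ => rfl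
  have hρ' : ∀ a (x y : X), inner ℂ (ρ (star a) x) y = inner ℂ x (ρ a y) := hρ
  have hb : ∀ a x, ‖ρ a x‖ ≤ ‖a‖ * ‖x‖ := by
    intro a x
    obtain ⟨d, hd⟩ := exists_star_mul_self_norm_sq a
    have key : ∀ b : A, inner ℂ (ρ b x) (ρ b x) = inner ℂ x (ρ (star b * b) x) := by
      intro b
      have := hρ' (star b) x (ρ b x)
      rw [star_star] at this
      rw [this, map_mul]; rfl
    have h1 : (‖ρ d x‖ ^ 2 : ℝ) = ‖a‖ ^ 2 * ‖x‖ ^ 2 - ‖ρ a x‖ ^ 2 := by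
      rw [← inner_self_eq_norm_sq (𝕜 := ℂ) (ρ d x), ← inner_self_eq_norm_sq (𝕜 := ℂ) (ρ a x),
        ← inner_self_eq_norm_sq (𝕜 := ℂ) x, key, key, hd, ← Complex.coe_smul, map_sub, map_smul,
        map_one, LinearMap.sub_apply, inner_sub_right, LinearMap.smul_apply, inner_smul_right]
      simp only [map_sub]
      congr 1
      simp [-Complex.ofReal_pow, -inner_self_eq_norm_sq_to_K]
    have h2 : ‖ρ a x‖ ^ 2 ≤ (‖a‖ * ‖x‖) ^ 2 := by
      rw [mul_pow]; nlinarith [sq_nonneg ‖ρ d x‖]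
    exact le_of_sq_le_sq h2 (by positivity)
  let m : A → X →L[ℂ] X := fun a => (ρ a).mkContinuous ‖a‖ (hb a)
  have hm : ∀ a x, m a x = ρ a x := fun _ _ => rfl
  let π : A →⋆ₐ[ℂ] (UniformSpace.Completion X →L[ℂ] UniformSpace.Completion X) :=
    { toFun := fun a => (m a).completion
      map_one' := by
        ext x
        induction x using UniformSpace.Completion.induction_on with
        | hp => apply isClosed_eq <;> fun_prop
        | ih x => simp [hm]
      map_mul' := fun a b => by
        ext x
        induction x using UniformSpace.Completion.induction_on with
        | hp => apply isClosed_eq <;> fun_prop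
        | ih x => simp [hm]
      map_zero' := by
        ext x
        induction x using UniformSpace.Completion.induction_on with
        | hp => apply isClosed_eq <;> fun_prop
        | ih x => simp [hm, UniformSpace.Completion.coe_zero]
      map_add' := fun a b => by
        ext x
        induction x using UniformSpace.Completion.induction_on with
        | hp => apply isClosed_eq <;> fun_prop
        | ih x => simp [hm, UniformSpace.Completion.coe_add]
      commutes' := fun z => by
        ext x
        induction x using UniformSpace.Completion.induction_on with
        | hp => apply isClosed_eq <;> fun_prop
        | ih x => simp [hm, Algebra.algebraMap_eq_smul_one]
      map_star' := fun a => by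
        refine (ContinuousLinearMap.eq_adjoint_iff (m (star a)).completion
          (m a).completion).mpr ?_
        intro x y
        induction x, y using UniformSpace.Completion.induction_on₂ with
        | hp => apply isClosed_eq <;> fun_prop
        | ih x y => simp [hm, hρ'] }
  refine ⟨⟨UniformSpace.Completion X, π⟩,
    (UniformSpace.Completion.toComplL : X →L[ℂ] UniformSpace.Completion X).toLinearMap,
    UniformSpace.Completion.denseRange_coe, ?_, ?_⟩
  · intro x y
    exact UniformSpace.Completion.inner_coe x y
  · intro a x
    exact ContinuousLinearMap.completion_apply_coe (m a) x

/-- The complex-linear functional whose real part is the given real functional. -/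
def cplx (f : A →ₗ[ℝ] ℝ) : A →ₗ[ℂ] ℂ where
  toFun a := f a - Complex.I * f (Complex.I • a)
  map_add' a b := by simp only [smul_add, map_add, Complex.ofReal_add]; ring
  map_smul' z a := by
    have h : ∀ b : A, z • b = z.re • b + z.im • (Complex.I • b) := by
      intro b
      conv_lhs => rw [← Complex.re_add_im z]
      rw [add_smul, mul_smul, Complex.coe_smul, Complex.coe_smul]
    have h2 : Complex.I • (Complex.I • a) = -a := by
      rw [smul_smul, Complex.I_mul_I, neg_one_smul]
    rw [smul_comm Complex.I z a, h, h (Complex.I • a), h2]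
    simp only [map_add, map_smul, map_neg, RingHom.id_apply, smul_eq_mul, Complex.ofReal_add,
      Complex.ofReal_mul, Complex.ofReal_neg]
    conv_rhs => rw [← Complex.re_add_im z]
    linear_combination ((z.im : ℂ) * f (Complex.I • a)) * Complex.I_mul_I

theorem cplx_apply (f : A →ₗ[ℝ] ℝ) (a : A) :
    cplx f a = f a - Complex.I * f (Complex.I • a) := rfl

theorem cplx_re (f : A →ₗ[ℝ] ℝ) (a : A) : (cplx f a).re = f a := by
  simp [cplx_apply]

/-- The map `∑ aₛ ⊗ s ↦ ∑ π(aₛ) eₛ` from finitely supported families to the Hilbert space. -/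
def Lam (R : HilbRep A) {S : Type} (e : S → R.H) : (S →₀ A) →ₗ[ℂ] R.H :=
  Finsupp.lsum ℂ fun s =>
    ((ContinuousLinearMap.apply ℂ R.H (e s)).toLinearMap ∘ₗ R.π.toAlgHom.toLinearMap)

theorem Lam_apply (R : HilbRep A) {S : Type} (e : S → R.H) (r : S →₀ A) :
    Lam R e r = r.sum fun s a => R.π a (e s) := rfl

theorem Lam_single (R : HilbRep A) {S : Type} (e : S → R.H) (s : S) (a : A) :
    Lam R e (Finsupp.single s a) = R.π a (e s) := by
  rw [Lam_apply, Finsupp.sum_single_index (by simp)]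

theorem HilbRep.inner_π (R : HilbRep A) (a b : A) (x y : R.H) :
    inner ℂ (R.π a x) (R.π b y) = inner ℂ x (R.π (star a * b) y) := by
  rw [map_mul, map_star, ContinuousLinearMap.star_eq_adjoint, mul_apply_eq_comp,
    ContinuousLinearMap.adjoint_inner_right]

/-- GNS for a positive semidefinite kernel with values in the real functionals on `A`. -/
theorem kernel_gns {S : Type} (γ : S → S → A →ₗ[ℝ] ℝ)
    (herm : ∀ s t a, γ s t (star a) = γ t s a)
    (pos : ∀ r : S →₀ A, 0 ≤ r.sum fun s a => r.sum fun t b => γ s t (star a * b)) :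
    ∃ (R : HilbRep A) (e : S → R.H), DenseRange (Lam R e) ∧
      ∀ s t a, (inner ℂ (e s) (R.π a (e t))).re = γ s t a := by
  let φ : S → S → A →ₗ[ℂ] ℂ := fun s t => cplx (γ s t)
  have hφ : ∀ s t a, (starRingEnd ℂ) (φ s t a) = φ t s (star a) := by
    intro s t a
    have : Complex.I • star a = -star (Complex.I • a) := by simp [star_smul]
    simp only [φ, cplx_apply, herm, this, map_neg]
    simp
  let c : PreInnerProductSpace.Core ℂ (S →₀ A) :=
    { inner := fun r r' => r.sum fun s a => r'.sum fun t b => φ s t (star a * b)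
      conj_inner_symm := fun x y => by
        simp only [Finsupp.sum, map_sum, hφ, star_mul, star_star]
        exact Finset.sum_comm
      re_inner_nonneg := fun x => by
        have := pos x
        simp only [Finsupp.sum] at this ⊢
        simpa [φ, cplx_re] using this
      add_left := fun x y z => by
        rw [Finsupp.sum_add_index']
        · intro s; simp
        · intro s a b; simp [add_mul, Finsupp.sum_add]
      smul_left := fun x y z => by
        rw [Finsupp.sum_smul_index']
        · simp only [Finsupp.sum, Finset.mul_sum, star_smul, smul_mul_assoc, map_smul]
          rfl
        · intro s; simp }
  have hc : ∀ r r' : S →₀ A, c.inner r r' =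
    r.sum fun s a => r'.sum fun t b => φ s t (star a * b) := fun _ _ => rfl
  obtain ⟨R, Λ, hd, hin, hπ⟩ := gns_exists c (Algebra.lsmul ℂ ℂ (S →₀ A)) (by
    intro (a : A) x y
    change ((star a • x).sum fun s b => y.sum fun t d => φ s t (star b * d)) =
      x.sum fun s b => (a • y).sum fun t d => φ s t (star b * d)
    rw [Finsupp.sum_smul_index' (by simp)]
    congr 1; ext s b
    rw [Finsupp.sum_smul_index' (by simp)]
    simp [mul_assoc])
  have hΛ : ∀ r, Λ r = Lam R (fun s => Λ (Finsupp.single s 1)) r := by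
    intro r
    rw [Lam_apply]
    conv_lhs => rw [← Finsupp.sum_single r]
    rw [Finsupp.sum, map_sum]
    refine Finset.sum_congr rfl fun s _ => ?_
    change Λ (Finsupp.single s (r s)) = R.π (r s) (Λ (Finsupp.single s 1))
    rw [hπ]
    simp
  refine ⟨R, fun s => Λ (Finsupp.single s 1), ?_, ?_⟩
  · convert hd using 1
    ext r
    exact (hΛ r).symm
  · intro s t a
    rw [hπ, hin, hc, Finsupp.sum_single_index (by simp), Algebra.lsmul_coe,
      Finsupp.sum_smul_index' (by simp), Finsupp.sum_single_index (by simp)]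
    simp [φ, cplx_re]

theorem norm_sq_Lam (R : HilbRep A) {S : Type} (e : S → R.H) (r : S →₀ A) :
    ‖Lam R e r‖ ^ 2 =
      r.sum fun s a => r.sum fun t b => (inner ℂ (e s) (R.π (star a * b) (e t))).re := by
  rw [← inner_self_eq_norm_sq (𝕜 := ℂ), Lam_apply]
  simp only [Finsupp.sum, sum_inner, inner_sum, R.inner_π, map_sum]
  rw [Finset.sum_comm]
  rfl

/-- A family with the same kernel as a cyclic family is its image under an isometric
intertwiner. -/
theorem exists_intertwiner (R R' : HilbRep A) {S : Type} (e : S → R.H) (e' : S → R'.H)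
    (hd : DenseRange (Lam R e))
    (h : ∀ s t a, (inner ℂ (e' s) (R'.π a (e' t))).re = (inner ℂ (e s) (R.π a (e t))).re) :
    ∃ W : R.H →L[ℂ] R'.H, (∀ a s, W (R.π a (e s)) = R'.π a (e' s)) ∧ (∀ x, ‖W x‖ = ‖x‖) ∧
      ∀ a x, W (R.π a x) = R'.π a (W x) := by
  have hn : ∀ r, ‖Lam R' e' r‖ = ‖Lam R e r‖ := by
    intro r
    have : ‖Lam R' e' r‖ ^ 2 = ‖Lam R e r‖ ^ 2 := by simp only [norm_sq_Lam, h]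
    exact (sq_eq_sq₀ (norm_nonneg _) (norm_nonneg _)).1 this
  let W := (Lam R' e').extendOfNorm (Lam R e)
  have hW : ∀ r, W (Lam R e r) = Lam R' e' r := fun r =>
    LinearMap.extendOfNorm_eq hd ⟨1, fun x => by rw [hn, one_mul]⟩ r
  have hWs : ∀ a s, W (R.π a (e s)) = R'.π a (e' s) := by
    intro a s
    rw [← Lam_single, hW, Lam_single]
  refine ⟨W, hWs, ?_, ?_⟩
  · intro x
    induction x using hd.induction_on with
    | hp => apply isClosed_eq <;> fun_prop
    | ih r => rw [hW, hn]
  · intro a x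
    induction x using hd.induction_on with
    | hp => apply isClosed_eq <;> fun_prop
    | ih r =>
      rw [hW, Lam_apply, Lam_apply]
      simp only [Finsupp.sum, map_sum]
      refine Finset.sum_congr rfl fun s _ => ?_
      rw [← mul_apply_eq_comp, ← mul_apply_eq_comp, ← map_mul, ← map_mul,
        hWs]

end GNS

/-! ### Relative weak injectivity as an extension property -/

section Extension
variable {A B C : Type} [CStarAlgebra A] [CStarAlgebra B] [CStarAlgebra C]

theorem tensor_star_mul (x y : A ⊗[ℂ] C) : star (x * y) = star y * star x := by
  induction x with
  | zero => simp
  | add x₁ x₂ h₁ h₂ => simp [add_mul, mul_add, h₁, h₂]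
  | tmul a c =>
    induction y with
    | zero => simp
    | add y₁ y₂ h₁ h₂ => simp only [add_mul, mul_add, h₁, h₂, star_add]
    | tmul a' c' => simp [TensorProduct.star_tmul, Algebra.TensorProduct.tmul_mul_tmul]

namespace CommutingRepPair

theorem hom_tmul (p : CommutingRepPair A C) (a : A) (c : C) :
    p.hom (a ⊗ₜ c) = p.fst a * p.snd c := rfl

theorem hom_star (p : CommutingRepPair A C) (x : A ⊗[ℂ] C) : p.hom (star x) = star (p.hom x) := by
  induction x with
  | zero => simp
  | add x₁ x₂ h₁ h₂ => simp [h₁, h₂]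
  | tmul a c =>
    rw [TensorProduct.star_tmul, hom_tmul, hom_tmul, star_mul, map_star, map_star]
    rw [← map_star, ← map_star]
    exact p.commutes _ _

theorem norm_hom_bdd (x : A ⊗[ℂ] C) : ∃ M, ∀ p : CommutingRepPair A C, ‖p.hom x‖ ≤ M := by
  induction x with
  | zero => exact ⟨0, by simp⟩
  | add x₁ x₂ h₁ h₂ =>
    obtain ⟨M₁, h₁⟩ := h₁
    obtain ⟨M₂, h₂⟩ := h₂
    exact ⟨M₁ + M₂, fun p => by
      rw [map_add]; exact (norm_add_le _ _).trans (add_le_add (h₁ p) (h₂ p))⟩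
  | tmul a c =>
    refine ⟨‖a‖ * ‖c‖, fun p => ?_⟩
    rw [hom_tmul]
    exact (norm_mul_le _ _).trans (mul_le_mul (NonUnitalStarAlgHom.norm_apply_le p.fst a)
      (NonUnitalStarAlgHom.norm_apply_le p.snd c) (norm_nonneg _) (norm_nonneg _))

theorem norm_hom_le (p : CommutingRepPair A C) (x : A ⊗[ℂ] C) : ‖p.hom x‖ ≤ maxNorm A C x := by
  obtain ⟨M, hM⟩ := norm_hom_bdd x
  exact le_csSup ⟨M, by rintro _ ⟨p, rfl⟩; exact hM p⟩ ⟨p, rfl⟩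

end CommutingRepPair

theorem maxNorm_le {x : A ⊗[ℂ] C} {M : ℝ} (hM : 0 ≤ M)
    (h : ∀ p : CommutingRepPair A C, ‖p.hom x‖ ≤ M) : maxNorm A C x ≤ M :=
  Real.sSup_le (by rintro _ ⟨p, rfl⟩; exact h p) hM

theorem maxNorm_nonneg (x : A ⊗[ℂ] C) : 0 ≤ maxNorm A C x :=
  Real.sSup_nonneg (by rintro _ ⟨p, rfl⟩; exact norm_nonneg _)

/-- The canonical map `A ⊗ C → B ⊗ C`. -/
abbrev tmap (C : Type) [CStarAlgebra C] (j : A →⋆ₐ[ℂ] B) : A ⊗[ℂ] C →ₐ[ℂ] B ⊗[ℂ] C :=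
  Algebra.TensorProduct.map j.toAlgHom (AlgHom.id ℂ C)

theorem tmap_tmul (j : A →⋆ₐ[ℂ] B) (a : A) (c : C) : tmap C j (a ⊗ₜ c) = j a ⊗ₜ c := rfl

theorem tmap_star (j : A →⋆ₐ[ℂ] B) (x : A ⊗[ℂ] C) : tmap C j (star x) = star (tmap C j x) := by
  induction x with
  | zero => simp
  | add x₁ x₂ h₁ h₂ => simp only [star_add, map_add, h₁, h₂]
  | tmul a c =>
    rw [TensorProduct.star_tmul, tmap_tmul, tmap_tmul, TensorProduct.star_tmul, map_star]

/-- Finite sums of squares in the algebraic tensor product. -/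
def tSumSq (A C : Type) [CStarAlgebra A] [CStarAlgebra C] : AddSubmonoid (A ⊗[ℂ] C) :=
  AddSubmonoid.closure (Set.range fun w => star w * w)

theorem sq_mem_tSumSq (w : A ⊗[ℂ] C) : star w * w ∈ tSumSq A C :=
  AddSubmonoid.subset_closure ⟨w, rfl⟩

theorem star_real_smul (r : ℝ) (x : A ⊗[ℂ] C) : star (r • x) = r • star x := by
  induction x with
  | zero => simp
  | add x₁ x₂ h₁ h₂ => simp only [smul_add, star_add, h₁, h₂]
  | tmul a c => simp [TensorProduct.star_tmul, TensorProduct.smul_tmul', star_smul]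

theorem smul_mem_tSumSq {r : ℝ} (hr : 0 ≤ r) {x : A ⊗[ℂ] C} (hx : x ∈ tSumSq A C) :
    r • x ∈ tSumSq A C := by
  induction hx using AddSubmonoid.closure_induction with
  | mem x h =>
    obtain ⟨w, rfl⟩ := h
    have : r • (star w * w) = star (√r • w) * (√r • w) := by
      rw [star_real_smul, smul_mul_smul_comm, Real.mul_self_sqrt hr]
    change r • (star w * w) ∈ _
    rw [this]
    exact sq_mem_tSumSq _
  | zero => rw [smul_zero]; exact zero_mem _
  | add x y _ _ hx hy => rw [smul_add]; exact add_mem hx hy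

theorem CommutingRepPair.hom_tSumSq (p : CommutingRepPair A C) {x : A ⊗[ℂ] C}
    (hx : x ∈ tSumSq A C) : ∃ c, p.hom x = star c * c := by
  let _ := CStarAlgebra.spectralOrder p.carrier
  have _ := CStarAlgebra.spectralOrderedRing p.carrier
  apply CStarAlgebra.nonneg_iff_eq_star_mul_self.1
  induction hx using AddSubmonoid.closure_induction with
  | mem x h =>
    obtain ⟨w, rfl⟩ := h
    change 0 ≤ p.hom (star w * w)
    rw [map_mul, p.hom_star]
    exact star_mul_self_nonneg _
  | zero => simp
  | add x y _ _ hx hy => rw [map_add]; exact add_nonneg hx hy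

/-- The elements of the algebraic tensor product with sum-of-squares real part. -/
def tCone (A C : Type) [CStarAlgebra A] [CStarAlgebra C] : PointedCone ℝ (A ⊗[ℂ] C) where
  carrier := {z | z + star z ∈ tSumSq A C}
  zero_mem' := by simp [zero_mem]
  add_mem' := fun {x y} hx hy => by
    have : x + y + star (x + y) = (x + star x) + (y + star y) := by rw [star_add]; abel
    simp only [Set.mem_ofPred_eq] at *
    rw [this]
    exact add_mem hx hy
  smul_mem' := fun r x hx => by
    have : (r.1 • x) + star (r.1 • x) = r.1 • (x + star x) := by
      rw [star_real_smul, smul_add]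
    simp only [Set.mem_ofPred_eq] at *
    change (r.1 • x) + star (r.1 • x) ∈ _
    rw [this]
    exact smul_mem_tSumSq r.2 hx

theorem mem_tCone {z : A ⊗[ℂ] C} : z ∈ tCone A C ↔ z + star z ∈ tSumSq A C := Iff.rfl

theorem tCone_unit (b : B) (c : C) :
    ((((‖b‖ ^ 2 + ‖c‖ ^ 2) / 2 : ℝ) • (1 : B)) ⊗ₜ[ℂ] (1 : C)) + b ⊗ₜ c ∈ tCone B C := by
  obtain ⟨d, hd⟩ := exists_star_mul_self_norm_sq (star b)
  obtain ⟨d', hd'⟩ := exists_star_mul_self_norm_sq c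
  rw [norm_star, star_star] at hd
  -- `b ⊗ c + b* ⊗ c* = (b* ⊗ 1 + 1 ⊗ c)* (b* ⊗ 1 + 1 ⊗ c) - b b* ⊗ 1 - 1 ⊗ c* c`
  have key : ((((‖b‖ ^ 2 + ‖c‖ ^ 2) / 2 : ℝ) • (1 : B)) ⊗ₜ[ℂ] (1 : C)) + b ⊗ₜ c +
      star (((((‖b‖ ^ 2 + ‖c‖ ^ 2) / 2 : ℝ) • (1 : B)) ⊗ₜ[ℂ] (1 : C)) + b ⊗ₜ c) =
      star (star b ⊗ₜ[ℂ] (1 : C) + (1 : B) ⊗ₜ c) * (star b ⊗ₜ[ℂ] (1 : C) + (1 : B) ⊗ₜ c) +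
      star (d ⊗ₜ[ℂ] (1 : C)) * (d ⊗ₜ[ℂ] (1 : C)) +
      star ((1 : B) ⊗ₜ[ℂ] d') * ((1 : B) ⊗ₜ[ℂ] d') := by
    simp only [star_add, TensorProduct.star_tmul, star_star, star_one, add_mul, mul_add,
      Algebra.TensorProduct.tmul_mul_tmul, one_mul, mul_one, hd, hd', TensorProduct.sub_tmul,
      TensorProduct.tmul_sub, star_real_smul, TensorProduct.tmul_smul, ← TensorProduct.smul_tmul']
    module
  rw [mem_tCone, key]
  exact add_mem (add_mem (sq_mem_tSumSq _) (sq_mem_tSumSq _)) (sq_mem_tSumSq _)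

/-- Relative weak injectivity as an extension property: a positive functional composed with a
commuting pair `p` of representations of `A` and `C` extends to a positive functional on the
algebraic tensor product `B ⊗ C`. -/
theorem rwi_extend (j : A →⋆ₐ[ℂ] B) (h : RWI j) (p : CommutingRepPair A C)
    (f : p.carrier →ₗ[ℝ] ℝ) (hs : ∀ x, f (star x) = f x) (hp : ∀ x, 0 ≤ f (star x * x)) :
    ∃ g : B ⊗[ℂ] C →ₗ[ℝ] ℝ, (∀ a c, g (j a ⊗ₜ c) = f (p.fst a * p.snd c)) ∧
      (∀ z, g (star z) = g z) ∧ ∀ z, 0 ≤ g (star z * z) := by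
  obtain ⟨g, hg, hgK⟩ := riesz_along ((tmap C j).toLinearMap.restrictScalars ℝ)
    (f ∘ₗ (p.hom.toLinearMap.restrictScalars ℝ)) (tCone B C)
    (by
      intro x hx
      change tmap C j x + star (tmap C j x) ∈ tSumSq B C at hx
      change 0 ≤ f (p.hom x)
      rw [← tmap_star, ← map_add] at hx
      set x' := x + star x with hx'
      -- the positivity of `x'` in the maximal tensor product of `B` and `C` is the estimate
      -- `‖m - x'‖ ≤ m` with `m = ‖x'‖`, and RWI turns it into the same estimate over `A`
      have h1 : maxNorm B C (tmap C j (((maxNorm B C (tmap C j x') : ℝ) : ℂ) • 1 - x')) ≤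
          maxNorm B C (tmap C j x') := by
        refine maxNorm_le (maxNorm_nonneg _) fun q => ?_
        obtain ⟨c, hc⟩ := q.hom_tSumSq hx
        have h2 := q.norm_hom_le (tmap C j x')
        rw [hc] at h2
        have h3 := norm_smul_one_sub_sq_le c h2
        rwa [map_sub, map_sub, map_smul, map_smul, map_one, map_one, hc, Complex.coe_smul]
      rw [h C] at h1
      have h4 := (p.norm_hom_le _).trans h1
      rw [map_sub, map_smul, map_one, Complex.coe_smul] at h4
      obtain ⟨c, hc⟩ := exists_sq_of_norm_sub_le
        (by rw [← p.hom_star, hx', star_add, star_star, add_comm]) h4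
      have h5 := hp c
      rw [← hc, hx', map_add, p.hom_star, map_add, hs] at h5
      linarith)
    (by
      intro y
      induction y with
      | zero => exact ⟨0, by simp⟩
      | add y₁ y₂ h₁ h₂ =>
        obtain ⟨x₁, h₁⟩ := h₁
        obtain ⟨x₂, h₂⟩ := h₂
        refine ⟨x₁ + x₂, ?_⟩
        rw [map_add, add_add_add_comm]
        exact add_mem h₁ h₂
      | tmul b c =>
        refine ⟨(((‖b‖ ^ 2 + ‖c‖ ^ 2) / 2 : ℝ) • (1 : A)) ⊗ₜ[ℂ] (1 : C), ?_⟩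
        have : tmap C j ((((‖b‖ ^ 2 + ‖c‖ ^ 2) / 2 : ℝ) • (1 : A)) ⊗ₜ[ℂ] (1 : C)) =
            (((‖b‖ ^ 2 + ‖c‖ ^ 2) / 2 : ℝ) • (1 : B)) ⊗ₜ[ℂ] (1 : C) := by
          rw [tmap_tmul, ← Complex.coe_smul, map_smul, map_one, Complex.coe_smul]
        change tmap C j _ + _ ∈ _
        rw [this]
        exact tCone_unit b c)
  refine ⟨g, fun a c => hg (a ⊗ₜ c), fun z => ?_, fun z => ?_⟩
  · have h1 := hgK (z - star z) (by
      rw [mem_tCone, star_sub, star_star]; simp [zero_mem])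
    have h2 := hgK (star z - z) (by
      rw [mem_tCone, star_sub, star_star]; simp [zero_mem])
    rw [map_sub] at h1 h2
    linarith
  · apply hgK
    rw [mem_tCone, tensor_star_mul, star_star]
    exact add_mem (sq_mem_tSumSq _) (sq_mem_tSumSq _)

end Extension

/-! ### Finite matrix cones and hermitian kernels -/

/-- An abstract table of products `s* t`: `q s t` names the value of `s* t`, and `inv` is the
adjoint. The last condition says that only products `s'* s'` may share the name of a product `s* s`. -/
structure Pairing (S Q : Type) where
  q : S → S → Q
  inv : Q → Q
  inv_q : ∀ s t, inv (q s t) = q t s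
  diag : ∀ s s' t', q s' t' = q s s → s' = t'

theorem exists_sq_of_nonneg {A : Type} [CStarAlgebra A] [PartialOrder A] [StarOrderedRing A]
    {a : A} (h : 0 ≤ a) : ∃ c, a = star c * c :=
  CStarAlgebra.nonneg_iff_eq_star_mul_self.1 h

section Kernels
open scoped Classical
attribute [local instance] CStarAlgebra.spectralOrder CStarAlgebra.spectralOrderedRing
variable {S Q A : Type} [CStarAlgebra A] (P : Pairing S Q) (F : Finset S)

theorem Pairing.q_swap (s t s' t' : S) : P.q s t = P.q s' t' ↔ P.q t s = P.q t' s' := by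
  constructor
  · intro h
    rw [← P.inv_q, h, P.inv_q]
  · intro h
    rw [← P.inv_q, h, P.inv_q]

/-- `γ` is hermitian and completely positive on the finite set `F` of directions. -/
structure IsKer (γ : Q → A →ₗ[ℝ] ℝ) : Prop where
  herm : ∀ (s t : F) a, γ (P.q s t) (star a) = γ (P.q t s) a
  pos : ∀ r : F → A, 0 ≤ ∑ s : F, ∑ t : F, γ (P.q s t) (star (r s) * r t)

/-- The cone of `A`-valued families `z` on `Q` whose hermitian part is the push-forward of a
positive matrix under `q`, as far as the values on `F × F` are concerned. -/
def InK (z : Q → A) : Prop :=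
  ∃ M : CStarMatrix F F A, 0 ≤ M ∧ ∀ s₀ t₀ : F,
    z (P.q s₀ t₀) + star (z (P.q t₀ s₀)) =
      ∑ s : F, ∑ t : F, if P.q s t = P.q s₀ t₀ then M s t else 0

variable {P F}

theorem InK.exists_root {z : Q → A} (h : InK P F z) : ∃ R : F → F → A, ∀ s₀ t₀ : F,
    z (P.q s₀ t₀) + star (z (P.q t₀ s₀)) =
      ∑ s : F, ∑ t : F, if P.q s t = P.q s₀ t₀ then ∑ k, star (R k s) * R k t else 0 := by
  obtain ⟨M, hM, h⟩ := h
  obtain ⟨R, rfl⟩ := exists_sq_of_nonneg hM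
  refine ⟨R, fun s₀ t₀ => (h s₀ t₀).trans ?_⟩
  simp only [CStarMatrix.mul_apply, CStarMatrix.star_apply]

theorem InK.of_root {z : Q → A} (R : F → F → A) (h : ∀ s₀ t₀ : F,
    z (P.q s₀ t₀) + star (z (P.q t₀ s₀)) =
      ∑ s : F, ∑ t : F, if P.q s t = P.q s₀ t₀ then ∑ k, star (R k s) * R k t else 0) :
    InK P F z := by
  refine ⟨star (CStarMatrix.ofMatrix (Matrix.of R)) * CStarMatrix.ofMatrix (Matrix.of R),
    star_mul_self_nonneg _, fun s₀ t₀ => (h s₀ t₀).trans ?_⟩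
  simp only [CStarMatrix.mul_apply, CStarMatrix.star_apply]
  rfl

theorem InK.of_zero {z : Q → A} (h : ∀ s t : F, z (P.q s t) + star (z (P.q t s)) = 0) :
    InK P F z :=
  InK.of_root 0 fun s₀ t₀ => by simp [h]

theorem InK.add {z w : Q → A} (hz : InK P F z) (hw : InK P F w) : InK P F (z + w) := by
  obtain ⟨M, hM, hz⟩ := hz
  obtain ⟨N, hN, hw⟩ := hw
  refine ⟨M + N, add_nonneg hM hN, fun s₀ t₀ => ?_⟩
  rw [Pi.add_apply, Pi.add_apply, star_add, add_add_add_comm, hz, hw]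
  simp only [← Finset.sum_add_distrib, CStarMatrix.add_apply]
  refine Finset.sum_congr rfl fun s _ => Finset.sum_congr rfl fun t _ => ?_
  split_ifs <;> simp

theorem InK.smul {z : Q → A} {c : ℝ} (hc : 0 ≤ c) (hz : InK P F z) : InK P F (c • z) := by
  obtain ⟨R, hz⟩ := hz.exists_root
  refine InK.of_root (fun k s => √c • R k s) fun s₀ t₀ => ?_
  rw [Pi.smul_apply, Pi.smul_apply, star_smul, star_trivial, ← smul_add, hz]
  simp only [Finset.smul_sum, star_smul, star_trivial, smul_mul_smul_comm, Real.mul_self_sqrt hc,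
    smul_ite, smul_zero]

variable (P F A) in
/-- `InK` as a pointed cone. -/
def KCone : PointedCone ℝ (Q → A) where
  carrier := {z | InK P F z}
  zero_mem' := InK.of_zero fun s t => by simp
  add_mem' := fun h₁ h₂ => h₁.add h₂
  smul_mem' := fun c _ h => h.smul c.2

theorem mem_KCone {z : Q → A} : z ∈ KCone A P F ↔ InK P F z := Iff.rfl

variable (P F A) in
/-- The order unit of `KCone`. -/
def KUnit : Q → A := fun x => ∑ s : F, if P.q s s = x then 1 else 0

theorem KUnit_swap (s t : F) : star (KUnit A P F (P.q t s)) = KUnit A P F (P.q s t) := by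
  unfold KUnit
  rw [star_sum]
  refine Finset.sum_congr rfl fun k _ => ?_
  rw [P.q_swap k k t s]
  split_ifs <;> simp

/-- Pushing forward the scalar matrix `c` gives `c` times the order unit. -/
theorem KUnit_eq (x : Q) (c : ℝ) :
    ∑ s : F, ∑ t : F, (if P.q s t = x then (algebraMap ℝ (CStarMatrix F F A) c) s t else 0) =
      c • KUnit A P F x := by
  unfold KUnit
  rw [Finset.smul_sum]
  refine Finset.sum_congr rfl fun s _ => ?_
  rw [Finset.sum_eq_single s]
  · rw [Algebra.algebraMap_eq_smul_one, CStarMatrix.smul_apply, CStarMatrix.one_apply_eq]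
    split_ifs <;> simp
  · intro t _ hts
    rw [Algebra.algebraMap_eq_smul_one, CStarMatrix.smul_apply, CStarMatrix.one_apply_ne hts.symm]
    simp
  · simp

theorem KUnit_mem : InK P F (KUnit A P F) := by
  refine ⟨algebraMap ℝ _ 2, ?_, fun s₀ t₀ => ?_⟩
  · have := algebraMap_mono (CStarMatrix F F A) (zero_le_two (α := ℝ))
    simpa using this
  · rw [KUnit_eq, KUnit_swap, two_smul]

/-- `KUnit` is an order unit: the hermitian part of `z` is averaged over the fibres of `q` into a
self-adjoint matrix, which a multiple of the identity makes positive. -/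
theorem KUnit_dense (z : Q → A) : ∃ t : ℝ, InK P F (t • KUnit A P F + z) := by
  let n : Q → ℝ := fun x => ∑ s : F, ∑ t : F, if P.q s t = x then 1 else 0
  have hn : ∀ s₀ t₀ : F, n (P.q s₀ t₀) = n (P.q t₀ s₀) := by
    intro s₀ t₀
    simp only [n]
    rw [Finset.sum_comm]
    simp only [P.q_swap _ _ (t₀ : S) s₀]
  have hn0 : ∀ s₀ t₀ : F, n (P.q s₀ t₀) ≠ 0 := by
    intro s₀ t₀
    apply ne_of_gt
    refine Finset.sum_pos' (fun s _ => Finset.sum_nonneg fun t _ => by split_ifs <;> simp)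
      ⟨s₀, Finset.mem_univ _, Finset.sum_pos' (fun t _ => by split_ifs <;> simp)
        ⟨t₀, Finset.mem_univ _, by simp⟩⟩
  let N : CStarMatrix F F A := CStarMatrix.ofMatrix
    (Matrix.of fun s t => (n (P.q s t))⁻¹ • (z (P.q s t) + star (z (P.q t s))))
  have hNa : ∀ s t, N s t = (n (P.q s t))⁻¹ • (z (P.q s t) + star (z (P.q t s))) :=
    fun _ _ => rfl
  have hN : IsSelfAdjoint N := by
    ext s t
    rw [CStarMatrix.star_apply, hNa, hNa, hn]
    simp [add_comm]
  -- the half compensates for `KUnit` being counted twice in the hermitian part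
  refine ⟨‖N‖ / 2, algebraMap ℝ _ ‖N‖ + N, ?_, fun s₀ t₀ => ?_⟩
  · have := hN.neg_algebraMap_norm_le_self
    rwa [neg_le_iff_add_nonneg'] at this
  · have h1 : ∀ s t : F, (if P.q s t = P.q s₀ t₀ then (algebraMap ℝ _ ‖N‖ + N) s t else 0) =
        (if P.q s t = P.q s₀ t₀ then (algebraMap ℝ (CStarMatrix F F A) ‖N‖) s t else 0) +
        (if P.q s t = P.q s₀ t₀ then (1 : ℝ) else 0) •
          ((n (P.q s₀ t₀))⁻¹ • (z (P.q s₀ t₀) + star (z (P.q t₀ s₀)))) := by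
      intro s t
      split_ifs with h
      · rw [CStarMatrix.add_apply, hNa, h, (P.q_swap _ _ _ _).1 h, one_smul]
      · simp
    simp only [h1, Finset.sum_add_distrib, ← Finset.sum_smul]
    rw [KUnit_eq]
    change _ = _ + n (P.q s₀ t₀) • _
    rw [smul_smul, mul_inv_cancel₀ (hn0 _ _), one_smul]
    simp only [Pi.add_apply, Pi.smul_apply, star_add, star_smul, star_trivial, KUnit_swap]
    module

variable (P F) in
/-- The values `s* t` for `s, t` in `F`. -/
def QF : Finset Q := Finset.univ.image fun x : F × F => P.q x.1 x.2

theorem mem_QF {x : Q} : x ∈ QF P F ↔ ∃ s t : F, P.q s t = x := by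
  simp [QF]

variable (P F) in
/-- The duality pairing between families of functionals and families of elements. -/
def kpair (γ : Q → A →ₗ[ℝ] ℝ) (z : Q → A) : ℝ := ∑ x ∈ QF P F, γ x (z x)

theorem kpair_fiber (γ : Q → A →ₗ[ℝ] ℝ) (M : F → F → A) :
    ∑ x ∈ QF P F, γ x (∑ s : F, ∑ t : F, if P.q s t = x then M s t else 0) =
      ∑ s : F, ∑ t : F, γ (P.q s t) (M s t) := by
  simp only [map_sum, apply_ite (γ _), map_zero]
  rw [Finset.sum_comm]
  refine Finset.sum_congr rfl fun s _ => ?_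
  rw [Finset.sum_comm]
  refine Finset.sum_congr rfl fun t _ => ?_
  rw [Finset.sum_ite_eq, if_pos (mem_QF.2 ⟨s, t, rfl⟩)]

theorem IsKer.two_kpair {γ : Q → A →ₗ[ℝ] ℝ} (hγ : IsKer P F γ) (z : Q → A) :
    2 * kpair P F γ z = ∑ x ∈ QF P F, γ x (z x + star (z (P.inv x))) := by
  simp only [map_add, Finset.sum_add_distrib, two_mul]
  congr 1
  refine Finset.sum_nbij' P.inv P.inv ?_ ?_ ?_ ?_ ?_ <;> intro x hx <;>
    obtain ⟨s, t, rfl⟩ := mem_QF.1 hx <;> simp only [P.inv_q]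
  · exact mem_QF.2 ⟨t, s, rfl⟩
  · exact mem_QF.2 ⟨t, s, rfl⟩
  · exact (hγ.herm t s _).symm

theorem IsKer.kpair_nonneg {γ : Q → A →ₗ[ℝ] ℝ} (hγ : IsKer P F γ) {z : Q → A}
    (hz : InK P F z) : 0 ≤ kpair P F γ z := by
  obtain ⟨R, hz⟩ := hz.exists_root
  have h : 2 * kpair P F γ z = ∑ k, ∑ s : F, ∑ t : F, γ (P.q s t) (star (R k s) * R k t) := by
    rw [hγ.two_kpair]
    trans ∑ x ∈ QF P F, γ x (∑ s : F, ∑ t : F,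
      if P.q s t = x then ∑ k, star (R k s) * R k t else 0)
    · refine Finset.sum_congr rfl fun x hx => ?_
      obtain ⟨s, t, rfl⟩ := mem_QF.1 hx
      rw [P.inv_q, hz]
    · rw [kpair_fiber]
      simp only [map_sum]
      refine Eq.trans (Finset.sum_congr rfl fun s _ => Finset.sum_comm) ?_
      exact Finset.sum_comm
  have : 0 ≤ 2 * kpair P F γ z := by
    rw [h]; exact Finset.sum_nonneg fun k _ => hγ.pos _
  linarith

/-- Elements with the values of a rank-one positive matrix belong to the cone. -/
theorem InK.rank_one (r : F → A) :
    InK P F fun x => ∑ s : F, ∑ t : F, if P.q s t = x then star (r s) * r t else 0 := by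
  rcases isEmpty_or_nonempty F with hF | ⟨⟨k₀⟩⟩
  · exact InK.of_zero fun s => hF.elim s
  have h1 : ∀ s t : F, star (∑ s' : F, ∑ t' : F, if P.q s' t' = P.q t s then
      star (r s') * r t' else 0) =
      ∑ s' : F, ∑ t' : F, if P.q s' t' = P.q s t then star (r s') * r t' else 0 := by
    intro s t
    simp only [star_sum]
    rw [Finset.sum_comm]
    refine Finset.sum_congr rfl fun s' _ => Finset.sum_congr rfl fun t' _ => ?_
    rw [P.q_swap t' s' t s]
    split_ifs <;> simp
  refine InK.of_root (fun k s => if k = k₀ then √2 • r s else 0) fun s₀ t₀ => ?_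
  rw [h1, ← two_smul ℝ]
  simp only [Finset.smul_sum]
  refine Finset.sum_congr rfl fun s _ => Finset.sum_congr rfl fun t _ => ?_
  rw [Finset.sum_eq_single k₀ (by intro k _ hk; simp [hk]) (by simp)]
  simp only [if_true, star_smul, star_trivial, smul_mul_smul_comm,
    Real.mul_self_sqrt (zero_le_two (α := ℝ)), smul_ite, smul_zero]

/-- Functionals that are positive on the cone are kernels. -/
theorem IsKer.of_functional (g : (Q → A) →ₗ[ℝ] ℝ) (hg : ∀ z, InK P F z → 0 ≤ g z) :
    IsKer P F (fun x => g ∘ₗ LinearMap.single ℝ (fun _ => A) x) := by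
  constructor
  · intro s t a
    have h0 : ∀ s₀ t₀ : F,
        (Pi.single (P.q s t) (star a) - Pi.single (P.q t s) a : Q → A) (P.q s₀ t₀) +
        star ((Pi.single (P.q s t) (star a) - Pi.single (P.q t s) a : Q → A) (P.q t₀ s₀)) = 0 := by
      intro s₀ t₀
      simp only [Pi.sub_apply, Pi.single_apply]
      rw [P.q_swap t₀ s₀ s t, P.q_swap t₀ s₀ t s]
      split_ifs <;> simp
    have h1 := hg _ (InK.of_zero (P := P) (F := F) h0)
    have h2 := hg _ (InK.of_zero (P := P) (F := F)
      (z := -(Pi.single (P.q s t) (star a) - Pi.single (P.q t s) a)) fun s₀ t₀ => by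
        have := h0 s₀ t₀
        rw [Pi.neg_apply, Pi.neg_apply, star_neg, ← neg_add, this, neg_zero])
    rw [map_neg] at h2
    rw [map_sub] at h1 h2
    simp only [LinearMap.comp_apply, LinearMap.coe_single]
    linarith
  · intro r
    have h := hg _ (InK.rank_one (P := P) r)
    convert h using 1
    simp only [LinearMap.comp_apply, LinearMap.coe_single, ← map_sum]
    congr 1
    ext x
    simp only [Finset.sum_apply, Pi.single_apply, eq_comm]

/-- Separation of a point from the cone by a normalized kernel. -/
theorem exists_ker_of_not_InK {z : Q → A} {ε : ℝ} (hz : ¬ InK P F (z + ε • KUnit A P F)) :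
    ∃ γ : Q → A →ₗ[ℝ] ℝ, IsKer P F γ ∧ ∑ s : F, γ (P.q s s) 1 = 1 ∧ kpair P F γ z ≤ -ε := by
  obtain ⟨g, hg, hgu, hgz⟩ := cone_separation (KCone A P F) (KUnit A P F) _ KUnit_mem
    KUnit_dense hz
  refine ⟨_, IsKer.of_functional g hg, ?_, ?_⟩
  · rw [← hgu]
    simp only [LinearMap.comp_apply, LinearMap.coe_single, ← map_sum]
    congr 1
    ext x
    simp only [Finset.sum_apply, Pi.single_apply, eq_comm, KUnit]
  · have h0 : ∀ w : Q → A, (∀ x ∈ QF P F, w x = 0) → 0 ≤ g w := by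
      intro w hw
      apply hg
      refine InK.of_zero fun s t => ?_
      rw [hw _ (mem_QF.2 ⟨s, t, rfl⟩), hw _ (mem_QF.2 ⟨t, s, rfl⟩)]
      simp
    have h1 : kpair P F (fun x => g ∘ₗ LinearMap.single ℝ (fun _ => A) x) z =
        g (∑ x ∈ QF P F, Pi.single x (z x)) := by
      simp only [kpair, LinearMap.comp_apply, LinearMap.coe_single, map_sum]
    have h2 := h0 (∑ x ∈ QF P F, Pi.single x (z x) - z) (by
      intro x hx
      simp [Finset.sum_apply, Pi.single_apply, hx])
    have h3 := h0 (z - ∑ x ∈ QF P F, Pi.single x (z x)) (by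
      intro x hx
      simp [Finset.sum_apply, Pi.single_apply, hx])
    rw [map_add, map_smul, hgu, smul_eq_mul, mul_one] at hgz
    rw [map_sub] at h2 h3
    rw [h1]
    linarith

/-- A normalized kernel is contractive. -/
theorem IsKer.bound {γ : Q → A →ₗ[ℝ] ℝ} (hγ : IsKer P F γ)
    (h1 : ∑ s : F, γ (P.q s s) 1 = 1) (s t : F) (b : A) : -‖b‖ ≤ γ (P.q s t) b := by
  have form : ∀ (s t : F) (a b : A), 0 ≤ γ (P.q s s) (star a * a) + γ (P.q s t) (star a * b) +
      γ (P.q t s) (star b * a) + γ (P.q t t) (star b * b) := by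
    intro s t a b
    have := hγ.pos (Pi.single s a + Pi.single t b)
    have e : ∀ (s t : F) (a b : A), ∑ s' : F, ∑ t' : F, γ (P.q s' t')
        (star ((Pi.single s a : F → A) s') * (Pi.single t b : F → A) t') =
        γ (P.q s t) (star a * b) := by
      intro s t a b
      rw [Finset.sum_eq_single s, Finset.sum_eq_single t]
      · simp
      · intro t' _ ht; simp [Pi.single_eq_of_ne ht]
      · simp
      · intro s' _ hs; simp [Pi.single_eq_of_ne hs]
      · simp
    simp only [Pi.add_apply, star_add, add_mul, mul_add, map_add, Finset.sum_add_distrib, e] at this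
    linarith
  have sqn : ∀ (s : F) (a : A), 0 ≤ γ (P.q s s) (star a * a) := by
    intro s a
    have := form s s a 0
    simpa using this
  have le1 : ∀ s : F, γ (P.q s s) 1 ≤ 1 := by
    intro s
    rw [← h1]
    exact Finset.single_le_sum (f := fun s : F => γ (P.q s s) 1)
      (fun s _ => by simpa using sqn s 1) (Finset.mem_univ s)
  have ge0 : 0 ≤ γ (P.q s s) 1 := by simpa using sqn s 1
  rcases (norm_nonneg b).eq_or_lt with hb | hb
  · have : b = 0 := norm_eq_zero.1 hb.symm
    simp [this]
  have h2 := form s t (‖b‖ • 1) b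
  obtain ⟨c, hc⟩ := exists_star_mul_self_norm_sq b
  have h3 := sqn t c
  rw [hc, map_sub, map_smul] at h3
  have h4 := hγ.herm t s b
  simp only [star_smul, star_trivial, star_one, one_mul, smul_mul_assoc,
    mul_smul_comm, mul_one, map_smul, smul_eq_mul, h4] at h2 h3
  have h5 := le1 s
  have h6 := le1 t
  have h7 : 0 ≤ 2 * ‖b‖ * (‖b‖ + γ (P.q s t) b) := by nlinarith
  have h8 : 0 ≤ ‖b‖ + γ (P.q s t) b := nonneg_of_mul_nonneg_right h7 (by positivity)
  linarith

end Kernels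

/-! ### Extending kernels on finite sets of directions -/

section FinExtend
open scoped Classical
attribute [local instance] CStarAlgebra.spectralOrder CStarAlgebra.spectralOrderedRing
variable {A B : Type} [CStarAlgebra A] [CStarAlgebra B]

/-- Relative weak injectivity applied to the commutant of a representation `ρ` of `A`: a positive
functional `f` extends the kernel `f (ρ a * (T s)* * T t)` from `A` to `B`. -/
theorem extend_centralizer (j : A →⋆ₐ[ℂ] B) (h : RWI j) {M : Type} [CStarAlgebra M]
    (ρ : A →⋆ₐ[ℂ] M) (f : M → ℝ) (hadd : ∀ x y, f (x + y) = f x + f y)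
    (hsmul : ∀ (c : ℝ) x, f ((c : ℂ) • x) = c * f x) (hs : ∀ x, f (star x) = f x)
    (hp : ∀ x, 0 ≤ f (star x * x)) {ι : Type} [Fintype ι] (T : ι → M)
    (hT : ∀ a i, Commute (ρ a) (T i)) :
    ∃ ψ : ι → ι → B →ₗ[ℝ] ℝ, (∀ s t b, ψ s t (star b) = ψ t s b) ∧
      (∀ r : ι → B, 0 ≤ ∑ s, ∑ t, ψ s t (star (r s) * r t)) ∧
      (∀ s t a, ψ s t (j a) = f (ρ a * (star (T s) * T t))) ∧
      ∀ s t s' t', star (T s) * T t = star (T s') * T t' → ψ s t = ψ s' t' := by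
  -- the commutant is the second tensor factor
  let C := StarSubalgebra.centralizer ℂ (Set.range ρ)
  have hC : IsClosed (C : Set M) := by
    rw [StarSubalgebra.coe_centralizer]
    exact Set.isClosed_centralizer _
  let _ : CStarAlgebra C := StarSubalgebra.cstarAlgebra C
  let p : CommutingRepPair A C :=
    { carrier := M
      fst := ρ
      snd := C.subtype
      commutes := fun a c => by
        have := (StarSubalgebra.mem_centralizer_iff ℂ).1 c.2 (ρ a) ⟨a, rfl⟩
        exact this.1 }
  have hTC : ∀ i, T i ∈ C := by
    intro i
    refine (StarSubalgebra.mem_centralizer_iff ℂ).2 ?_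
    rintro _ ⟨a, rfl⟩
    refine ⟨hT a i, ?_⟩
    rw [← map_star]
    exact hT _ i
  obtain ⟨g, hg, hgs, hgp⟩ := rwi_extend j h p
    { toFun := f
      map_add' := hadd
      map_smul' := fun c x => (congrArg f (Complex.coe_smul c x).symm).trans (hsmul c x) } hs hp
  let T' : ι → C := fun i => ⟨T i, hTC i⟩
  let ψ : ι → ι → B →ₗ[ℝ] ℝ := fun s t =>
    g ∘ₗ ((TensorProduct.mk ℂ B C).flip (star (T' s) * T' t)).restrictScalars ℝ
  have hψ : ∀ s t b, ψ s t b = g (b ⊗ₜ (star (T' s) * T' t)) := fun _ _ _ => rfl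
  refine ⟨ψ, fun s t b => ?_, fun r => ?_, fun s t a => ?_, fun s t s' t' hst => ?_⟩
  · rw [hψ, hψ, ← hgs (b ⊗ₜ _), TensorProduct.star_tmul, star_mul, star_star]
  · have := hgp (∑ s, r s ⊗ₜ T' s)
    rw [star_sum, Finset.sum_mul] at this
    simp only [Finset.mul_sum, TensorProduct.star_tmul, Algebra.TensorProduct.tmul_mul_tmul,
      map_sum] at this
    exact this
  · rw [hψ, hg]
    rfl
  · have : star (T' s) * T' t = star (T' s') * T' t' := Subtype.ext hst
    simp only [ψ, this]

/-- The diagonal amplification of a representation. -/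
def diagRep {M D : Type} [CStarAlgebra M] [Fintype D] (ρ : A →⋆ₐ[ℂ] M) :
    A →⋆ₐ[ℂ] CStarMatrix D D M where
  toFun a := CStarMatrix.ofMatrix (Matrix.diagonal fun _ => ρ a)
  map_one' := by
    ext d c
    change Matrix.diagonal (fun _ => ρ 1) d c = (1 : Matrix D D M) d c
    rw [map_one, Matrix.diagonal_one]
  map_mul' a b := by
    ext d c
    simp [CStarMatrix.mul_apply, Matrix.diagonal_apply]
  map_zero' := by
    ext d c
    simp
  map_add' a b := by
    ext d c
    simp only [CStarMatrix.add_apply, CStarMatrix.ofMatrix_apply, Matrix.diagonal_apply, map_add]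
    split_ifs <;> simp
  commutes' z := by
    ext d c
    simp only [Algebra.algebraMap_eq_smul_one, map_smul, map_one, CStarMatrix.smul_apply,
      CStarMatrix.one_apply, CStarMatrix.ofMatrix_apply, Matrix.diagonal_apply]
    split_ifs <;> simp
  map_star' a := by
    ext d c
    simp only [CStarMatrix.star_apply, CStarMatrix.ofMatrix_apply, Matrix.diagonal_apply, map_star,
      eq_comm]
    split_ifs <;> simp

theorem diagRep_apply {M D : Type} [CStarAlgebra M] [Fintype D] (ρ : A →⋆ₐ[ℂ] M) (a : A)
    (d c : D) : diagRep (D := D) ρ a d c = if d = c then ρ a else 0 := rfl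

/-- Extension of a kernel on the finite set `V × D` of directions whose values at
`((v, d), (v, c))` do not depend on `v`. The invariance makes the vectors of the GNS space in the
directions `(v, d)` images of those in the directions `(v₀, d)` under partial isometries in the
commutant of `A` with a common initial projection. -/
theorem fin_extend_core {V D : Type} [Fintype V] [Fintype D] [Nonempty V] (j : A →⋆ₐ[ℂ] B)
    (h : RWI j) (κ : V × D → V × D → A →ₗ[ℝ] ℝ) (herm : ∀ s t a, κ s t (star a) = κ t s a)
    (pos : ∀ r : V × D → A, 0 ≤ ∑ s, ∑ t, κ s t (star (r s) * r t))
    (dep : ∀ v w d c, κ (v, d) (v, c) = κ (w, d) (w, c)) :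
    ∃ ψ : V × D → V × D → B →ₗ[ℝ] ℝ, (∀ s t b, ψ s t (star b) = ψ t s b) ∧
      (∀ r : V × D → B, 0 ≤ ∑ s, ∑ t, ψ s t (star (r s) * r t)) ∧
      (∀ s t a, ψ s t (j a) = κ s t a) ∧ ∀ v w d c, ψ (v, d) (v, c) = ψ (w, d) (w, c) := by
  rcases isEmpty_or_nonempty D with hD | ⟨⟨d₀⟩⟩
  · exact ⟨fun _ _ => 0, by simp, by simp, fun s => hD.elim s.2, by simp⟩
  obtain ⟨v₀⟩ := ‹Nonempty V›
  obtain ⟨R, e, -, he⟩ := kernel_gns κ herm (by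
    intro r
    have := pos r
    rw [Finsupp.sum_fintype _ _ (by simp)]
    refine this.trans_eq (Finset.sum_congr rfl fun s _ => ?_)
    rw [Finsupp.sum_fintype _ _ (by simp)])
  obtain ⟨R', e', hd', he'⟩ := kernel_gns (fun d c => κ (v₀, d) (v₀, c)) (fun d c => herm _ _)
    (by
      intro r
      have := norm_sq_Lam R (fun d => e (v₀, d)) r
      simp only [he] at this
      rw [← this]
      positivity)
  have hW : ∀ v, ∃ W : R'.H →L[ℂ] R.H, (∀ a d, W (R'.π a (e' d)) = R.π a (e (v, d))) ∧
      (∀ x, ‖W x‖ = ‖x‖) ∧ ∀ a x, W (R'.π a x) = R.π a (W x) := fun v =>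
    exists_intertwiner R' R e' (fun d => e (v, d)) hd' fun d c a => by
      rw [he, he', dep v v₀]
  choose W hWe hWn hWπ using hW
  have hWW : ∀ v x, ContinuousLinearMap.adjoint (W v) (W v x) = x := by
    intro v x
    have := (ContinuousLinearMap.norm_map_iff_adjoint_comp_self (W v)).1 (hWn v)
    exact congrArg (fun T : R'.H →L[ℂ] R'.H => T x) this
  have hWπ' : ∀ v a x, ContinuousLinearMap.adjoint (W v) (R.π a x) =
      R'.π a (ContinuousLinearMap.adjoint (W v) x) := by
    intro v a x
    refine ext_inner_left ℂ fun y => ?_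
    rw [ContinuousLinearMap.adjoint_inner_right, ← star_star a, map_star, map_star (R'.π),
      ContinuousLinearMap.star_eq_adjoint, ContinuousLinearMap.adjoint_inner_right,
      ContinuousLinearMap.star_eq_adjoint, ContinuousLinearMap.adjoint_inner_right,
      ContinuousLinearMap.adjoint_inner_right, hWπ]
  let X : V → R.H →L[ℂ] R.H := fun v => W v ∘L ContinuousLinearMap.adjoint (W v₀)
  have hXa : ∀ v x, X v x = W v (ContinuousLinearMap.adjoint (W v₀) x) := fun _ _ => rfl
  have hXe : ∀ v d, X v (e (v₀, d)) = e (v, d) := by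
    intro v d
    have h1 := hWe v₀ 1 d
    have h2 := hWe v 1 d
    simp only [map_one, one_apply_eq_self] at h1 h2
    rw [hXa, ← h1, hWW, h2]
  have hXπ : ∀ v a, R.π a * X v = X v * R.π a := by
    intro v a
    ext x
    rw [mul_apply_eq_comp, mul_apply_eq_comp, hXa, hXa, hWπ', hWπ]
  have hXX : ∀ v, star (X v) * X v = X v₀ := by
    intro v
    ext x
    refine ext_inner_left ℂ fun y => ?_
    rw [mul_apply_eq_comp, ContinuousLinearMap.star_eq_adjoint,
      ContinuousLinearMap.adjoint_inner_right, hXa, hXa, hXa,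
      ← ContinuousLinearMap.adjoint_inner_right (W v), hWW,
      ContinuousLinearMap.adjoint_inner_left]
  -- In `M_D(B(H))`, the element `T (v, d)` has the entry `X v` in position `(d₀, d)`. Since
  -- `(X v)* X v` does not depend on `v`, neither does `T (v, d)* T (v, c)`.
  let T : V × D → CStarMatrix D D (R.H →L[ℂ] R.H) := fun s =>
    CStarMatrix.ofMatrix (Matrix.single d₀ s.2 (X s.1))
  have hTT : ∀ s t, star (T s) * T t = CStarMatrix.ofMatrix
      (Matrix.single s.2 t.2 (star (X s.1) * X t.1)) := by
    intro s t
    ext1 d c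
    rw [CStarMatrix.mul_apply, Finset.sum_eq_single d₀]
    · simp only [CStarMatrix.star_apply, T, CStarMatrix.ofMatrix_apply, Matrix.single_apply]
      by_cases h1 : s.2 = d <;> by_cases h2 : t.2 = c <;> simp [h1, h2]
    · intro k _ hk
      simp only [CStarMatrix.star_apply, T, CStarMatrix.ofMatrix_apply, Matrix.single_apply]
      simp [hk.symm]
    · simp
  let f : CStarMatrix D D (R.H →L[ℂ] R.H) → ℝ :=
    fun M => (∑ d, ∑ c, inner ℂ (e (v₀, d)) (M d c (e (v₀, c)))).re
  have hf : ∀ M, f M = (∑ d, ∑ c, inner ℂ (e (v₀, d)) (M d c (e (v₀, c)))).re := fun _ => rfl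
  obtain ⟨ψ, hψs, hψp, hψj, hψd⟩ := extend_centralizer j h (diagRep (D := D) R.π) f
    (fun M N => by
      simp only [hf, CStarMatrix.add_apply, add_apply, inner_add_right, Finset.sum_add_distrib,
        Complex.add_re])
    (fun z M => by
      simp only [hf, CStarMatrix.smul_apply, smul_apply, inner_smul_right, ← Finset.mul_sum,
        Complex.re_ofReal_mul])
    (by
      intro M
      rw [hf, hf, Finset.sum_comm, ← Complex.conj_re]
      congr 1
      simp only [map_sum]
      refine Finset.sum_congr rfl fun d _ => Finset.sum_congr rfl fun c _ => ?_
      rw [CStarMatrix.star_apply, ContinuousLinearMap.star_eq_adjoint,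
        ContinuousLinearMap.adjoint_inner_right, inner_conj_symm])
    (by
      intro M
      have : (∑ d, ∑ c, inner ℂ (e (v₀, d)) ((star M * M) d c (e (v₀, c)))) =
          ∑ k, inner ℂ (∑ d, M k d (e (v₀, d))) (∑ c, M k c (e (v₀, c))) := by
        simp only [CStarMatrix.mul_apply, sum_apply, inner_sum, sum_inner,
          CStarMatrix.star_apply, ContinuousLinearMap.star_eq_adjoint, mul_apply_eq_comp,
          ContinuousLinearMap.adjoint_inner_right]
        refine Eq.trans (Finset.sum_congr rfl fun d _ => Finset.sum_comm) ?_
        rw [Finset.sum_comm]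
        refine Finset.sum_congr rfl fun k _ => Finset.sum_comm
      rw [hf, this, Complex.re_sum]
      exact Finset.sum_nonneg fun k _ => inner_self_nonneg (𝕜 := ℂ))
    T
    (by
      intro a s
      change _ * _ = _ * _
      ext1 d c
      rw [CStarMatrix.mul_apply, CStarMatrix.mul_apply]
      simp only [diagRep_apply, ite_mul, zero_mul, mul_ite, mul_zero, Finset.sum_ite_eq',
        Finset.mem_univ, if_true, T, CStarMatrix.ofMatrix_apply,
        Matrix.single_apply]
      rw [Finset.sum_eq_single d₀ (fun k _ hk => by simp [hk.symm]) (by simp), hXπ]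
      by_cases h1 : d₀ = d <;> by_cases h2 : s.2 = c <;> simp [h1, h2, eq_comm (a := d)])
  refine ⟨ψ, hψs, hψp, fun s t a => ?_, fun v w d c => ?_⟩
  · rw [hψj, hTT, hf, ← he, Complex.re_sum]
    simp only [Complex.re_sum]
    rw [Finset.sum_eq_single s.2, Finset.sum_eq_single t.2]
    · rw [CStarMatrix.mul_apply]
      simp only [diagRep_apply, ite_mul, zero_mul, Finset.sum_ite_eq, Finset.mem_univ, if_true,
        CStarMatrix.ofMatrix_apply, Matrix.single_apply_same]
      rw [← hXe s.1 s.2, ← hXe t.1 t.2]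
      have : R.π a * (star (X s.1) * X t.1) = star (X s.1) * (R.π a * X t.1) := by
        have h1 : star (R.π (star a) * X s.1) = star (X s.1 * R.π (star a)) := by rw [hXπ]
        rw [star_mul, star_mul, ← map_star, star_star] at h1
        rw [← mul_assoc, ← mul_assoc, h1]
      rw [this, mul_apply_eq_comp, ContinuousLinearMap.star_eq_adjoint,
        ContinuousLinearMap.adjoint_inner_right]
      rfl
    · intro c _ hc
      rw [CStarMatrix.mul_apply]
      simp only [diagRep_apply, ite_mul, zero_mul, Finset.sum_ite_eq, Finset.mem_univ, if_true,
        CStarMatrix.ofMatrix_apply, Matrix.single_apply]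
      simp [hc.symm]
    · simp
    · intro d _ hd
      refine Finset.sum_eq_zero fun c _ => ?_
      rw [CStarMatrix.mul_apply]
      simp only [diagRep_apply, ite_mul, zero_mul, Finset.sum_ite_eq, Finset.mem_univ, if_true,
        CStarMatrix.ofMatrix_apply, Matrix.single_apply]
      simp [hd.symm]
    · simp
  · apply hψd
    rw [hTT, hTT]
    simp only [hXX]

/-- The multiplication table of formal products `v d` with `v` from a set `V` of unitaries and
`d` from `D`: only the relation `(v d)* (v c) = d* c` is recorded. -/
def unitaryPairing (V D : Type) : Pairing (V × D) (D × D ⊕ (V × D) × (V × D)) where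
  q s t := if s.1 = t.1 then Sum.inl (s.2, t.2) else Sum.inr (s, t)
  inv := Sum.map Prod.swap Prod.swap
  inv_q s t := by
    by_cases h : s.1 = t.1
    · simp [h]
    · simp [h, Ne.symm h]
  diag s s' t' h := by
    by_cases h' : s'.1 = t'.1
    · simp only [h', if_true, Sum.inl.injEq, Prod.mk.injEq] at h
      exact Prod.ext h' (h.1.trans h.2.symm)
    · simp [h'] at h

theorem unitaryPairing_q_eq {V D : Type} {s t s' t' : V × D}
    (h : (unitaryPairing V D).q s t = (unitaryPairing V D).q s' t') :
    (s = s' ∧ t = t') ∨ (s.1 = t.1 ∧ s'.1 = t'.1 ∧ s.2 = s'.2 ∧ t.2 = t'.2) := by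
  simp only [unitaryPairing] at h
  split_ifs at h with h1 h2 h3 <;> simp at h
  · exact Or.inr ⟨h1, h2, h.1, h.2⟩
  · exact Or.inl h

theorem unitaryPairing_q_same {V D : Type} (v w : V) (d c : D) :
    (unitaryPairing V D).q (v, d) (v, c) = (unitaryPairing V D).q (w, d) (w, c) := by
  simp [unitaryPairing]

/-- Kernels on a finite rectangle of directions extend along relatively weakly injective maps. -/
theorem fin_extend {V D : Type} (j : A →⋆ₐ[ℂ] B) (h : RWI j) (V₀ : Finset V) (D₀ : Finset D)
    (γ : (D × D ⊕ (V × D) × (V × D)) → A →ₗ[ℝ] ℝ)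
    (hγ : IsKer (unitaryPairing V D) (V₀ ×ˢ D₀) γ) :
    ∃ ψ : (D × D ⊕ (V × D) × (V × D)) → B →ₗ[ℝ] ℝ,
      IsKer (unitaryPairing V D) (V₀ ×ˢ D₀) ψ ∧
      ∀ x ∈ QF (unitaryPairing V D) (V₀ ×ˢ D₀), ∀ a, ψ x (j a) = γ x a := by
  set P := unitaryPairing V D with hP
  rcases isEmpty_or_nonempty V₀ with hV | hV
  · have hF : IsEmpty (V₀ ×ˢ D₀ : Finset (V × D)) :=
      ⟨fun s => hV.elim ⟨s.1.1, (Finset.mem_product.1 s.2).1⟩⟩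
    refine ⟨fun _ => 0, ⟨fun s => hF.elim s, fun r => by simp⟩, fun x hx => ?_⟩
    obtain ⟨s, -⟩ := mem_QF.1 hx
    exact hF.elim s
  let E : V₀ × D₀ ≃ (V₀ ×ˢ D₀ : Finset (V × D)) :=
    { toFun := fun p => ⟨(p.1, p.2), Finset.mem_product.2 ⟨p.1.2, p.2.2⟩⟩
      invFun := fun s => (⟨s.1.1, (Finset.mem_product.1 s.2).1⟩,
        ⟨s.1.2, (Finset.mem_product.1 s.2).2⟩)
      left_inv := fun p => rfl
      right_inv := fun s => rfl }
  obtain ⟨ψ, hψs, hψp, hψj, hψd⟩ := fin_extend_core j h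
    (fun s t : V₀ × D₀ => γ (P.q (E s) (E t))) (fun s t a => hγ.herm _ _ a)
    (fun r => by
      have := hγ.pos (fun s => r (E.symm s))
      simp only [← Equiv.sum_comp E, Equiv.symm_apply_apply] at this
      exact this)
    (fun v w d c => by
      change γ (P.q (v.1, d.1) (v.1, c.1)) = γ (P.q (w.1, d.1) (w.1, c.1))
      rw [hP, unitaryPairing_q_same v.1 w.1])
  have hwell : ∀ s t s' t' : V₀ × D₀, P.q (E s) (E t) = P.q (E s') (E t') →
      ψ s t = ψ s' t' := by
    rintro ⟨v, d⟩ ⟨w, c⟩ ⟨v', d'⟩ ⟨w', c'⟩ hq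
    rcases unitaryPairing_q_eq hq with ⟨h1, h2⟩ | ⟨h1, h2, h3, h4⟩
    · rw [E.injective (Subtype.ext h1), E.injective (Subtype.ext h2)]
    · obtain rfl : v = w := Subtype.ext h1
      obtain rfl : v' = w' := Subtype.ext h2
      obtain rfl : d = d' := Subtype.ext h3
      obtain rfl : c = c' := Subtype.ext h4
      exact hψd _ _ _ _
  let Ψ : (D × D ⊕ (V × D) × (V × D)) → B →ₗ[ℝ] ℝ := fun x =>
    if hx : ∃ p : (V₀ × D₀) × (V₀ × D₀), P.q (E p.1) (E p.2) = x then
      ψ hx.choose.1 hx.choose.2 else 0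
  have hΨ : ∀ s t : V₀ × D₀, Ψ (P.q (E s) (E t)) = ψ s t := by
    intro s t
    have hx : ∃ p : (V₀ × D₀) × (V₀ × D₀), P.q (E p.1) (E p.2) = P.q (E s) (E t) :=
      ⟨(s, t), rfl⟩
    simp only [Ψ, dif_pos hx]
    exact hwell _ _ _ _ hx.choose_spec
  refine ⟨Ψ, ⟨fun s t b => ?_, fun r => ?_⟩, fun x hx a => ?_⟩
  · obtain ⟨s, rfl⟩ := E.surjective s
    obtain ⟨t, rfl⟩ := E.surjective t
    rw [hΨ, hΨ, hψs]
  · simp only [← Equiv.sum_comp E, hΨ]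
    exact hψp _
  · obtain ⟨s, t, rfl⟩ := mem_QF.1 hx
    obtain ⟨s, rfl⟩ := E.surjective s
    obtain ⟨t, rfl⟩ := E.surjective t
    rw [hΨ, hψj]

end FinExtend

/-! ### Lifting kernels from an ultraproduct to its factors -/

section Ultra
open scoped Classical
attribute [local instance] CStarAlgebra.spectralOrder CStarAlgebra.spectralOrderedRing

/-- The bounded family `f` represents the element `b` of the ultraproduct. -/
def Represents {I : Type} {A : I → Type} [∀ i, CStarAlgebra (A i)] {B : Type}
    (π : (∀ i, A i) → B) (f : ∀ i, A i) (b : B) : Prop := Bdd f ∧ π f = b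

section Reps
variable {I : Type} {U : Ultrafilter I} {A : I → Type} [∀ i, CStarAlgebra (A i)]
  {B : Type} [CStarAlgebra B] {π : (∀ i, A i) → B}

theorem Represents.exists (h : IsCStarUltraproduct U A B π) (b : B) : ∃ f, Represents π f b := by
  obtain ⟨f, hf, hb⟩ := h.surj b
  exact ⟨f, ⟨‖b‖, hf⟩, hb⟩

theorem Represents.add (h : IsCStarUltraproduct U A B π) {f g : ∀ i, A i} {a b : B}
    (hf : Represents π f a)
    (hg : Represents π g b) : Represents π (fun i => f i + g i) (a + b) := by
  obtain ⟨⟨M, hM⟩, rfl⟩ := hf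
  obtain ⟨⟨N, hN⟩, rfl⟩ := hg
  exact ⟨⟨M + N, fun i => (norm_add_le _ _).trans (add_le_add (hM i) (hN i))⟩,
    h.map_add _ _ ⟨M, hM⟩ ⟨N, hN⟩⟩

theorem Represents.mul (h : IsCStarUltraproduct U A B π) {f g : ∀ i, A i} {a b : B}
    (hf : Represents π f a)
    (hg : Represents π g b) : Represents π (fun i => f i * g i) (a * b) := by
  obtain ⟨⟨M, hM⟩, rfl⟩ := hf
  obtain ⟨⟨N, hN⟩, rfl⟩ := hg
  exact ⟨⟨M * N, fun i => (norm_mul_le _ _).trans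
    (mul_le_mul (hM i) (hN i) (norm_nonneg _) ((norm_nonneg _).trans (hM i)))⟩,
    h.map_mul _ _ ⟨M, hM⟩ ⟨N, hN⟩⟩

theorem Represents.star (h : IsCStarUltraproduct U A B π) {f : ∀ i, A i} {a : B}
    (hf : Represents π f a) :
    Represents π (fun i => star (f i)) (star a) := by
  obtain ⟨⟨M, hM⟩, rfl⟩ := hf
  exact ⟨⟨M, fun i => (norm_star _).trans_le (hM i)⟩, h.map_star _ ⟨M, hM⟩⟩

theorem Represents.smul (h : IsCStarUltraproduct U A B π) (c : ℝ) {f : ∀ i, A i} {a : B}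
    (hf : Represents π f a) : Represents π (fun i => c • f i) (c • a) := by
  obtain ⟨⟨M, hM⟩, rfl⟩ := hf
  refine ⟨⟨‖c‖ * M, fun i => ?_⟩, ?_⟩
  · rw [norm_smul]
    exact mul_le_mul_of_nonneg_left (hM i) (norm_nonneg _)
  · rw [← Complex.coe_smul, ← h.map_smul _ _ ⟨M, hM⟩]
    congr 1

theorem Represents.sub (h : IsCStarUltraproduct U A B π) {f g : ∀ i, A i} {a b : B}
    (hf : Represents π f a)
    (hg : Represents π g b) : Represents π (fun i => f i - g i) (a - b) := by
  have := hf.add h (hg.smul h (-1))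
  simpa only [neg_smul, one_smul, ← sub_eq_add_neg] using this

theorem Represents.one (h : IsCStarUltraproduct U A B π) : Represents π (fun _ => 1) 1 :=
  ⟨⟨1, fun i => by
    rcases subsingleton_or_nontrivial (A i) with hi | hi
    · simp [Subsingleton.elim (1 : A i) 0]
    · exact CStarRing.norm_one.le⟩, h.map_one⟩

theorem Represents.zero (h : IsCStarUltraproduct U A B π) : Represents π (fun _ => 0) 0 := by
  simpa using (Represents.one h).smul h 0

theorem Represents.sum (h : IsCStarUltraproduct U A B π) {ι : Type} (s : Finset ι)
    {f : ι → ∀ i, A i} {a : ι → B} (hf : ∀ k, Represents π (f k) (a k)) :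
    Represents π (fun i => ∑ k ∈ s, f k i) (∑ k ∈ s, a k) := by
  induction s using Finset.induction_on with
  | empty => simpa using Represents.zero h
  | insert k s hk ih =>
    simp only [Finset.sum_insert hk]
    exact (hf k).add h ih

theorem Represents.ite (h : IsCStarUltraproduct U A B π) (p : Prop) {f : ∀ i, A i} {a : B}
    (hf : Represents π f a) : Represents π (fun i => if p then f i else 0) (if p then a else 0) := by
  split_ifs
  · exact hf
  · exact Represents.zero h

theorem Represents.tendsto_zero (h : IsCStarUltraproduct U A B π) {f : ∀ i, A i}
    (hf : Represents π f 0) :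
    Tendsto (fun i => ‖f i‖) (U : Filter I) (nhds 0) := by
  have := h.norm_eq f hf.1
  rwa [hf.2, norm_zero] at this

theorem Represents.congr (h : IsCStarUltraproduct U A B π) {f g : ∀ i, A i} {a b : B}
    (hf : Represents π f a)
    (hg : Represents π g b) (hfg : ∀ᶠ i in (U : Filter I), f i = g i) : a = b := by
  have h1 := hf.sub h hg
  have h2 := h.norm_eq _ h1.1
  rw [h1.2] at h2
  have h3 : Tendsto (fun i => ‖f i - g i‖) (U : Filter I) (nhds 0) :=
    tendsto_const_nhds.congr' (hfg.mono fun i hi => by simp [hi])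
  exact sub_eq_zero.1 (norm_eq_zero.1 (tendsto_nhds_unique h2 h3))

/-- The families in the ultraproduct given by the push-forward of `R* R`. -/
theorem Represents.root (h : IsCStarUltraproduct U A B π) {S Q : Type} (P : Pairing S Q)
    (F : Finset S)
    {R : F → F → ∀ i, A i} {R' : F → F → B} (hR : ∀ k s, Represents π (R k s) (R' k s)) (x : Q) :
    Represents π (fun i => ∑ s : F, ∑ t : F,
        if P.q s t = x then ∑ k, Star.star (R k s i) * R k t i else 0)
      (∑ s : F, ∑ t : F, if P.q s t = x then ∑ k, Star.star (R' k s) * R' k t else 0) :=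
  Represents.sum h _ fun s => Represents.sum h _ fun t => Represents.ite h _ <|
    Represents.sum h _ fun k =>
    ((hR k s).star h).mul h (hR k t)

end Reps

/-- The entries of a root of an element of the cone are controlled by the element: by
`Pairing.diag`, the fibre of `q` over `q s s` consists of diagonal entries only. -/
theorem root_norm_sq_le {S Q A : Type} [CStarAlgebra A] {P : Pairing S Q} {F : Finset S}
    {z : Q → A} {R : F → F → A} (h : ∀ s₀ t₀ : F,
    z (P.q s₀ t₀) + star (z (P.q t₀ s₀)) =
      ∑ s : F, ∑ t : F, if P.q s t = P.q s₀ t₀ then ∑ k, star (R k s) * R k t else 0)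
    (k s : F) : ‖R k s‖ ^ 2 ≤ 2 * ‖z (P.q s s)‖ := by
  have h1 : ∑ s' : F, ∑ t : F, (if P.q s' t = P.q s s then ∑ k, star (R k s') * R k t else 0) =
      ∑ l ∈ Finset.univ.filter fun l : F × F => P.q l.1 l.1 = P.q s s,
        star (R l.2 l.1) * R l.2 l.1 := by
    rw [Finset.sum_filter, Fintype.sum_prod_type]
    refine Finset.sum_congr rfl fun s' _ => ?_
    rw [Finset.sum_eq_single s']
    · split_ifs <;> simp
    · intro t _ hts
      rw [if_neg]
      intro hq
      exact hts (Subtype.ext (P.diag _ _ _ hq).symm)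
    · simp
  refine (norm_sq_le_of_sum (Finset.univ.filter fun l : F × F => P.q l.1 l.1 = P.q s s)
    (fun l => R l.2 l.1) (k := (s, k)) (by simp)).trans ?_
  rw [← h1, ← h, two_mul]
  exact (norm_add_le _ _).trans_eq (by rw [norm_star])

section Main
variable {I : Type} {U : Ultrafilter I} {A B : I → Type} [∀ i, CStarAlgebra (A i)]
  [∀ i, CStarAlgebra (B i)] {A' B' : Type} [CStarAlgebra A'] [CStarAlgebra B']
  {πA : (∀ i, A i) → A'} {πB : (∀ i, B i) → B'} {S Q : Type} {P : Pairing S Q} {F : Finset S}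

/-- The cone of an ultraproduct contains the limits of elements of the cones of the factors. -/
theorem InK.of_eventually (hA : IsCStarUltraproduct U A A' πA) {z : Q → A'} {f : Q → ∀ i, A i}
    (hf : ∀ x, Represents πA (f x) (z x))
    (h : ∀ᶠ i in (U : Filter I), InK P F fun x => f x i) : InK P F z := by
  have hroot : ∀ i, ∃ R : F → F → A i, (InK P F (fun x => f x i) → ∀ s₀ t₀ : F,
      f (P.q s₀ t₀) i + star (f (P.q t₀ s₀) i) =
      ∑ s : F, ∑ t : F, if P.q s t = P.q s₀ t₀ then ∑ k, star (R k s) * R k t else 0) ∧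
      (¬ InK P F (fun x => f x i) → R = 0) := by
    intro i
    by_cases hi : InK P F fun x => f x i
    · obtain ⟨R, hR⟩ := hi.exists_root
      exact ⟨R, fun _ => hR, fun h => absurd hi h⟩
    · exact ⟨0, fun h => absurd h hi, fun _ => rfl⟩
  -- roots of the elements of the factors, set to `0` off the large set where they exist
  choose R hR hR0 using hroot
  have hb : ∀ k s, Bdd fun i => R i k s := by
    intro k s
    obtain ⟨M, hM⟩ := (hf (P.q s s)).1
    refine ⟨√(2 * M), fun i => ?_⟩
    by_cases hi : InK P F fun x => f x i
    · refine Real.le_sqrt_of_sq_le ((root_norm_sq_le (z := fun x => f x i) (hR i hi) k s).trans ?_)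
      linarith [hM i]
    · simp [hR0 i hi]
  refine InK.of_root (fun k s => πA fun i => R i k s) fun s₀ t₀ => ?_
  refine Represents.congr hA ((hf _).add hA ((hf _).star hA))
    (Represents.root hA P F (R := fun k s i => R i k s) (fun k s => ⟨hb k s, rfl⟩) _) ?_
  filter_upwards [h] with i hi
  exact hR i hi s₀ t₀

theorem kpair_KUnit (γ : Q → A' →ₗ[ℝ] ℝ) :
    kpair P F γ (KUnit A' P F) = ∑ s : F, γ (P.q s s) 1 := by
  unfold kpair KUnit
  simp only [map_sum, apply_ite (γ _), map_zero]
  rw [Finset.sum_comm]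
  refine Finset.sum_congr rfl fun s _ => ?_
  rw [Finset.sum_ite_eq, if_pos (mem_QF.2 ⟨s, s, rfl⟩)]

/-- If kernels on `F` extend from `A i` to `B i` for every `i`, then kernels on `F` over the
ultraproduct of the `A i` are nonnegative on the cone of the ultraproduct of the `B i`. Otherwise
the value would be negative on a family which is in the cone over the `B i` up to a small error
but at a definite distance from the cone over the `A i`. -/
theorem kpair_nonneg_of_ultra {j : ∀ i, A i →⋆ₐ[ℂ] B i}
    (hA : IsCStarUltraproduct U A A' πA) (hB : IsCStarUltraproduct U B B' πB)
    {J : A' →⋆ₐ[ℂ] B'}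
    (hJ : ∀ f : ∀ i, A i, Bdd f → J (πA f) = πB fun i => j i (f i))
    (hext : ∀ i (γ : Q → A i →ₗ[ℝ] ℝ), IsKer P F γ → ∃ ψ : Q → B i →ₗ[ℝ] ℝ, IsKer P F ψ ∧
      ∀ x ∈ QF P F, ∀ a, ψ x (j i a) = γ x a)
    {γ : Q → A' →ₗ[ℝ] ℝ} (hγ : IsKer P F γ) {y : Q → A'} (hy : InK P F fun x => J (y x)) :
    0 ≤ kpair P F γ y := by
  by_contra! hneg
  have hT : 0 ≤ kpair P F γ (KUnit A' P F) := hγ.kpair_nonneg KUnit_mem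
  set T := kpair P F γ (KUnit A' P F) with hTdef
  obtain ⟨ε, hε, hεT⟩ : ∃ ε : ℝ, 0 < ε ∧ kpair P F γ y + ε * T < 0 := by
    refine ⟨-kpair P F γ y / (2 * (T + 1)), by apply div_pos <;> linarith, ?_⟩
    have : -kpair P F γ y / (2 * (T + 1)) * T = -kpair P F γ y * (T / (2 * (T + 1))) := by ring
    rw [this]
    have h2 : T / (2 * (T + 1)) < 1 := by
      rw [div_lt_one (by linarith)]
      linarith
    nlinarith
  have hnot : ¬ InK P F (y + ε • KUnit A' P F) := by
    intro hin
    have := hγ.kpair_nonneg hin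
    have e : kpair P F γ (y + ε • KUnit A' P F) = kpair P F γ y + ε * T := by
      rw [hTdef]
      simp only [kpair, Pi.add_apply, Pi.smul_apply, map_add, map_smul, Finset.sum_add_distrib,
        Finset.mul_sum, smul_eq_mul]
    linarith
  choose f hf using fun x => Represents.exists hA (y x)
  have hfJ : ∀ x, Represents πB (fun i => j i (f x i)) (J (y x)) := by
    intro x
    obtain ⟨⟨M, hM⟩, h⟩ := hf x
    refine ⟨⟨M, fun i => (NonUnitalStarAlgHom.norm_apply_le (j i) _).trans (hM i)⟩, ?_⟩
    rw [← h, hJ _ ⟨M, hM⟩]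
  -- otherwise the limit `y + ε • KUnit` would be in the cone
  have hfar : ∀ᶠ i in (U : Filter I), ¬ InK P F ((fun x => f x i) + ε • KUnit (A i) P F) := by
    rw [Ultrafilter.eventually_not]
    intro h
    refine hnot (InK.of_eventually hA (f := fun x i => f x i + ε • KUnit (A i) P F x) ?_ h)
    intro x
    refine (hf x).add hA (Represents.smul hA ε ?_)
    exact Represents.sum hA _ fun s => Represents.ite hA _ (Represents.one hA)
  obtain ⟨Rlim, hRlim⟩ := hy.exists_root
  choose R hR using fun k s => Represents.exists hB (Rlim k s)
  -- over the `B i`, the family is in the cone up to an error vanishing along `U`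
  have herr : ∀ x ∈ QF P F, Represents πB (fun i => j i (f x i) + star (j i (f (P.inv x) i)) -
      ∑ s : F, ∑ t : F, if P.q s t = x then ∑ k, star (R k s i) * R k t i else 0) 0 := by
    intro x hx
    obtain ⟨s, t, rfl⟩ := mem_QF.1 hx
    have := ((hfJ (P.q s t)).add hB ((hfJ (P.inv (P.q s t))).star hB)).sub hB
      (Represents.root hB P F hR (P.q s t))
    rw [P.inv_q, hRlim, sub_self] at this
    rwa [P.inv_q]
  have hδ : 0 < ε / ((QF P F).card + 1) := by positivity
  have hsmall := (Filter.eventually_all_finset (QF P F)).2 fun x hx =>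
    (herr x hx).tendsto_zero hB |>.eventually (gt_mem_nhds hδ)
  obtain ⟨i, hi, hsi⟩ := (hfar.and hsmall).exists
  -- a normalized kernel over `A i` with value at most `-ε`; its extension to `B i` is almost
  -- nonnegative there
  obtain ⟨κ, hκ, hκ1, hκe⟩ := exists_ker_of_not_InK hi
  obtain ⟨ψ, hψ, hψκ⟩ := hext i κ hκ
  have hψ1 : ∑ s : F, ψ (P.q s s) 1 = 1 := by
    rw [← hκ1]
    refine Finset.sum_congr rfl fun s _ => ?_
    rw [← hψκ _ (mem_QF.2 ⟨s, s, rfl⟩), map_one (j i)]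
  have hkp : kpair P F ψ (fun x => j i (f x i)) = kpair P F κ (fun x => f x i) :=
    Finset.sum_congr rfl fun x hx => hψκ x hx _
  have h2 := hψ.two_kpair fun x => j i (f x i)
  have h3 : ∀ x ∈ QF P F, -(ε / ((QF P F).card + 1)) + ψ x (∑ s : F, ∑ t : F,
      if P.q s t = x then ∑ k, star (R k s i) * R k t i else 0) ≤
      ψ x (j i (f x i) + star (j i (f (P.inv x) i))) := by
    intro x hx
    have h4 := hsi x hx
    obtain ⟨s, t, hst⟩ := mem_QF.1 hx
    have h5 := hψ.bound hψ1 s t (j i (f x i) + star (j i (f (P.inv x) i)) -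
      ∑ s : F, ∑ t : F, if P.q s t = x then ∑ k, star (R k s i) * R k t i else 0)
    rw [hst, map_sub] at h5
    linarith
  have h4 := Finset.sum_le_sum h3
  rw [Finset.sum_add_distrib, kpair_fiber, ← h2, hkp, Finset.sum_const, nsmul_eq_mul] at h4
  have h5 : 0 ≤ ∑ s : F, ∑ t : F, ψ (P.q s t) (∑ k, star (R k s i) * R k t i) := by
    simp only [map_sum]
    refine le_of_le_of_eq (Finset.sum_nonneg fun k (_ : k ∈ Finset.univ) =>
      hψ.pos fun s => R k s i) ?_
    rw [Finset.sum_comm]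
    exact Finset.sum_congr rfl fun s _ => Finset.sum_comm
  have h6 : ((QF P F).card : ℝ) * (ε / ((QF P F).card + 1)) < ε := by
    rw [← mul_div_assoc, div_lt_iff₀ (by positivity)]
    nlinarith
  linarith

end Main

end Ultra

/-! ### Extending kernels on infinitely many directions -/

section InfExtend
open scoped Classical
attribute [local instance] CStarAlgebra.spectralOrder CStarAlgebra.spectralOrderedRing
variable {S Q A B : Type} [CStarAlgebra A] [CStarAlgebra B] {P : Pairing S Q}

/-- Values outside of `QF P F` being zero, membership in the cone passes to larger sets of
directions. -/
theorem InK.mono {F F' : Finset S} {z : Q → A} (hF : F ⊆ F') (hz : InK P F z)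
    (h0 : ∀ s t : F', P.q s t ∉ QF P F → z (P.q s t) = 0) : InK P F' z := by
  obtain ⟨R, hR⟩ := hz.exists_root
  -- a root of an element of the cone over `F`, extended by zero, is a root over `F'`
  let R' : S → S → A := fun k s => if h : k ∈ F ∧ s ∈ F then R ⟨k, h.1⟩ ⟨s, h.2⟩ else 0
  have hR' : ∀ k s : F, R' k s = R k s := fun k s => dif_pos ⟨k.2, s.2⟩
  have hRk : ∀ k s, k ∉ F → R' k s = 0 := fun k s h => dif_neg fun h' => h h'.1
  have hRs : ∀ k s, s ∉ F → R' k s = 0 := fun k s h => dif_neg fun h' => h h'.2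
  have key : ∀ x, ∑ s : F', ∑ t : F', (if P.q s t = x then ∑ k : F', star (R' k s) * R' k t
      else 0) = ∑ s : F, ∑ t : F, if P.q s t = x then ∑ k, star (R k s) * R k t else 0 := by
    intro x
    have e1 : ∀ s t, ∑ k : F', star (R' k s) * R' k t = ∑ k : F, star (R' k s) * R' k t := by
      intro s t
      rw [Finset.sum_coe_sort F' fun k => star (R' k s) * R' k t,
        Finset.sum_coe_sort F fun k => star (R' k s) * R' k t]
      exact (Finset.sum_subset hF fun k _ hk => by rw [hRk k s hk]; simp).symm
    have e2 : ∀ s, ∑ t : F', (if P.q s t = x then ∑ k : F, star (R' k s) * R' k t else 0) =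
        ∑ t : F, (if P.q s t = x then ∑ k : F, star (R' k s) * R' k t else 0) := by
      intro s
      rw [Finset.sum_coe_sort F'
          fun t => if P.q s t = x then ∑ k : F, star (R' k s) * R' k t else 0,
        Finset.sum_coe_sort F
          fun t => if P.q s t = x then ∑ k : F, star (R' k s) * R' k t else 0]
      exact (Finset.sum_subset hF fun t _ ht => by simp [hRs _ t ht]).symm
    simp only [e1, e2]
    rw [Finset.sum_coe_sort F' fun s => ∑ t : F,
        if P.q s t = x then ∑ k : F, star (R' k s) * R' k t else 0,
      ← Finset.sum_subset hF fun s _ hs => by simp [hRs _ s hs],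
      ← Finset.sum_coe_sort F fun s => ∑ t : F,
        if P.q s t = x then ∑ k : F, star (R' k s) * R' k t else 0]
    simp only [hR']
  refine InK.of_root (fun k s => R' k s) fun s₀ t₀ => ?_
  rw [key]
  by_cases hq : P.q s₀ t₀ ∈ QF P F
  · obtain ⟨s, t, hst⟩ := mem_QF.1 hq
    rw [← hst, ← (P.q_swap _ _ _ _).1 hst, hR]
  · have hq' : P.q t₀ s₀ ∉ QF P F := by
      intro h
      obtain ⟨s, t, hst⟩ := mem_QF.1 h
      exact hq (mem_QF.2 ⟨t, s, (P.q_swap _ _ _ _).1 hst⟩)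
    rw [h0 _ _ hq, h0 _ _ hq', star_zero, add_zero]
    refine (Finset.sum_eq_zero fun s _ => Finset.sum_eq_zero fun t _ => if_neg fun h => ?_).symm
    exact hq (mem_QF.2 ⟨s, t, h⟩)

theorem InK.congr {F : Finset S} {z w : Q → A} (hz : InK P F z)
    (h : ∀ x ∈ QF P F, z x = w x) : InK P F w := by
  obtain ⟨M, hM, hz⟩ := hz
  refine ⟨M, hM, fun s t => ?_⟩
  rw [← hz, h _ (mem_QF.2 ⟨s, t, rfl⟩), h _ (mem_QF.2 ⟨t, s, rfl⟩)]

theorem IsKer.congr {F : Finset S} {γ ψ : Q → A →ₗ[ℝ] ℝ} (hγ : IsKer P F γ)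
    (h : ∀ x ∈ QF P F, γ x = ψ x) : IsKer P F ψ := by
  have h' : ∀ s t : F, ψ (P.q s t) = γ (P.q s t) := fun s t => (h _ (mem_QF.2 ⟨s, t, rfl⟩)).symm
  constructor
  · intro s t a
    rw [h', h', hγ.herm]
  · intro r
    simp only [h']
    exact hγ.pos r

variable (B P) in
/-- Finitely supported families that eventually belong to the cones of a directed system of
finite sets of directions. -/
def KLim {L : Type} [SemilatticeSup L] (F : L → Finset S) : PointedCone ℝ (Q →₀ B) where
  carrier := {z | ∀ᶠ l in atTop, InK P (F l) z}
  zero_mem' := Eventually.of_forall fun l => InK.of_zero fun s t => by simp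
  add_mem' := fun {z w} h₁ h₂ => (h₁.and h₂).mono fun l h => by
    rw [Finsupp.coe_add]
    exact h.1.add h.2
  smul_mem' := fun c z h => h.mono fun l h => InK.smul c.2 h

/-- The extension theorem for kernels on an increasing union of finite sets of directions,
given positivity on each of them. -/
theorem inf_extend {L : Type} [SemilatticeSup L] [Nonempty L] {F : L → Finset S} (hF : Monotone F)
    (hcov : ∀ s, ∃ l, s ∈ F l) (J : A →⋆ₐ[ℂ] B) (γ : Q → A →ₗ[ℝ] ℝ)
    (hpos : ∀ l (y : Q → A), InK P (F l) (fun x => J (y x)) → 0 ≤ kpair P (F l) γ y) :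
    ∃ ψ : Q → B →ₗ[ℝ] ℝ, (∀ l, IsKer P (F l) ψ) ∧
      ∀ s t a, ψ (P.q s t) (J a) = γ (P.q s t) a := by
  -- only the values on actual products `q s t` are constrained, so `γ` is cut off elsewhere
  let γ' : Q → A →ₗ[ℝ] ℝ := fun x => if ∃ s t, P.q s t = x then γ x else 0
  have hγ' : ∀ s t, γ' (P.q s t) = γ (P.q s t) := fun s t => if_pos ⟨s, t, rfl⟩
  have hev : ∀ s t, ∀ᶠ l in atTop, P.q s t ∈ QF P (F l) := by
    intro s t
    obtain ⟨l₁, h₁⟩ := hcov s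
    obtain ⟨l₂, h₂⟩ := hcov t
    filter_upwards [eventually_ge_atTop (l₁ ⊔ l₂)] with l hl
    exact mem_QF.2 ⟨⟨s, hF (le_sup_left.trans hl) h₁⟩, ⟨t, hF (le_sup_right.trans hl) h₂⟩, rfl⟩
  have hsupp : ∀ T : Finset Q, ∀ᶠ l in atTop,
      ∀ x ∈ T, (∃ s t, P.q s t = x) → x ∈ QF P (F l) := by
    intro T
    refine (Filter.eventually_all_finset T).2 fun x _ => ?_
    by_cases hx : ∃ s t, P.q s t = x
    · obtain ⟨s, t, rfl⟩ := hx
      exact (hev s t).mono fun l hl _ => hl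
    · exact Eventually.of_forall fun l h => absurd h hx
  have hmono : ∀ l (z : Q →₀ B), InK P (F l) z → (∀ s t, P.q s t ∉ QF P (F l) → z (P.q s t) = 0) →
      z ∈ KLim B P F := by
    intro l z hz h0
    exact (eventually_ge_atTop l).mono fun l' hl => hz.mono (hF hl) fun s t => h0 s t
  let f : (Q →₀ A) →ₗ[ℝ] ℝ := Finsupp.lsum ℝ γ'
  let ι : (Q →₀ A) →ₗ[ℝ] (Q →₀ B) :=
    Finsupp.mapRange.linearMap (J.toAlgHom.toLinearMap.restrictScalars ℝ)
  have hι : ∀ y x, ι y x = J (y x) := fun _ _ => rfl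
  obtain ⟨g, hgι, hg⟩ := riesz_along ι f (KLim B P F) (by
      intro y hy
      obtain ⟨l, hl, hls⟩ := (Filter.Eventually.and hy (hsupp y.support)).exists
      refine (hpos l y hl).trans_eq ?_
      have e : kpair P (F l) γ y = ∑ x ∈ QF P (F l), γ' x (y x) := by
        refine Finset.sum_congr rfl fun x hx => ?_
        obtain ⟨s, t, rfl⟩ := mem_QF.1 hx
        rw [hγ']
      rw [e]
      change _ = ∑ x ∈ y.support, γ' x (y x)
      refine Finset.sum_congr_of_eq_on_inter ?_ ?_ ?_
      · intro x _ hx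
        rw [Finsupp.notMem_support_iff.1 hx, map_zero]
      · intro x hx hxl
        have : ¬ ∃ s t, P.q s t = x := fun h => hxl (hls x hx h)
        simp [γ', if_neg this]
      · intros
        rfl)
    (by
      intro y
      obtain ⟨l, hl⟩ := (hsupp y.support).exists
      obtain ⟨c, hc⟩ := KUnit_dense (P := P) (F := F l) (fun x => y x)
      have hu : ∀ x, ι (c • ∑ s : F l, Finsupp.single (P.q s s) 1) x = c • KUnit B P (F l) x := by
        intro x
        rw [map_smul, Finsupp.smul_apply, hι, KUnit, Finsupp.finsetSum_apply, map_sum]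
        congr 1
        refine Finset.sum_congr rfl fun s _ => ?_
        rw [Finsupp.single_apply]
        split_ifs <;> simp
      refine ⟨c • ∑ s : F l, Finsupp.single (P.q s s) 1, hmono l _ ?_ ?_⟩
      · refine hc.congr fun x _ => ?_
        rw [Finsupp.add_apply, hu]
        rfl
      · intro s t hst
        rw [Finsupp.add_apply, hu]
        have h1 : y (P.q s t) = 0 := by
          by_contra h
          exact hst (hl _ (Finsupp.mem_support_iff.2 h) ⟨s, t, rfl⟩)
        have h2 : KUnit B P (F l) (P.q s t) = 0 := by
          refine Finset.sum_eq_zero fun k _ => if_neg fun h => hst (mem_QF.2 ⟨k, k, h⟩)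
        rw [h1, h2, smul_zero, add_zero])
  refine ⟨fun x => g ∘ₗ Finsupp.lsingle x, fun l => ?_, fun s t a => ?_⟩
  -- `τ` restricts a family to the finitely many values of `q` on `F l`
  · let τ : (Q → B) →ₗ[ℝ] (Q →₀ B) :=
      ∑ x ∈ QF P (F l), Finsupp.lsingle x ∘ₗ LinearMap.proj x
    have hτ : ∀ w x, τ w x = if x ∈ QF P (F l) then w x else 0 := by
      intro w x
      simp only [τ, LinearMap.sum_apply, Finsupp.finsetSum_apply, LinearMap.comp_apply,
        LinearMap.proj_apply, Finsupp.lsingle_apply, Finsupp.single_apply]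
      rw [Finset.sum_ite_eq']
    refine (IsKer.of_functional (P := P) (F := F l) (g ∘ₗ τ) fun w hw => ?_).congr fun x hx => ?_
    · refine hg _ (hmono l _ (hw.congr fun x hx => ?_) fun s t hst => ?_)
      · rw [hτ, if_pos hx]
      · rw [hτ, if_neg hst]
    · ext a
      simp only [LinearMap.comp_apply, Finsupp.lsingle_apply, LinearMap.coe_single]
      congr 1
      ext y
      rw [hτ, Finsupp.single_apply, Pi.single_apply]
      by_cases hxy : x = y
      · subst hxy
        simp [hx]
      · simp [hxy, Ne.symm hxy]
  · rw [← hγ']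
    have := hgι (Finsupp.single (P.q s t) a)
    have e1 : ι (Finsupp.single (P.q s t) a) = Finsupp.single (P.q s t) (J a) := by
      simp [ι]
    have e2 : f (Finsupp.single (P.q s t) a) = γ' (P.q s t) a := by
      simp [f]
    rw [e1, e2] at this
    exact this

end InfExtend

/-! ### From kernels to representations of tensor products -/

section KernelRep
variable {B C : Type} [CStarAlgebra B] [CStarAlgebra C]

/-- Operators which agree on the vectors `R.π b (e s)` of a generating family are equal. -/
theorem eq_of_Lam_dense {S : Type} (R : HilbRep B) (e : S → R.H) (hd : DenseRange (Lam R e))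
    {T T' : R.H →L[ℂ] R.H} (h : ∀ b s, T (R.π b (e s)) = T' (R.π b (e s))) : T = T' := by
  refine ContinuousLinearMap.ext fun x => congrFun (hd.equalizer T.continuous T'.continuous ?_) x
  ext r
  simp only [comp_apply, Lam_apply, Finsupp.sum, map_sum, h]

/-- The norm of a combination of the vectors `e s`, when their inner products are those of the
vectors of a GNS representation of `C`. -/
theorem norm_sq_combination {S : Type} (R : HilbRep B) (e : S → R.H) (val : S → C)
    (φ : C →ₗ[ℝ] ℝ)
    (he : ∀ s t (z : ℂ), (inner ℂ (e s) (R.π (z • 1) (e t))).re = φ (z • (star (val s) * val t)))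
    (r : S →₀ ℂ) : ‖Finsupp.linearCombination ℂ e r‖ ^ 2 =
      φ (star (Finsupp.linearCombination ℂ val r) * Finsupp.linearCombination ℂ val r) := by
  rw [← inner_self_eq_norm_sq (𝕜 := ℂ)]
  simp only [Finsupp.linearCombination_apply, Finsupp.sum, sum_inner, inner_sum, star_sum,
    Finset.sum_mul, Finset.mul_sum, map_sum]
  refine Finset.sum_congr rfl fun s _ => Finset.sum_congr rfl fun t _ => ?_
  have := he t s (star (r t) * r s)
  rw [map_smul, map_one, smul_apply, one_apply_eq_self, inner_smul_right] at this
  rw [inner_smul_left, inner_smul_right, star_smul, smul_mul_smul_comm, ← this, ← mul_assoc]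
  rfl

/-- A kernel over `B` in the directions `v d`, with `v` a unitary of `C` and `d` in `C`, whose
scalar part comes from a functional `φ` on `C`, arises from a pair of commuting representations
of `B` and `C` and a vector `ℓ 1`. -/
theorem pair_of_kernel (κ : unitary C × C → unitary C × C → B →ₗ[ℝ] ℝ)
    (herm : ∀ s t b, κ s t (star b) = κ t s b)
    (pos : ∀ r : unitary C × C →₀ B, 0 ≤ r.sum fun s a => r.sum fun t b => κ s t (star a * b))
    (dep : ∀ v w d c, κ (v, d) (v, c) = κ (w, d) (w, c)) (φ : C →ₗ[ℝ] ℝ)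
    (hφ : ∀ s t (z : ℂ), κ s t (z • 1) = φ (z • (star (s.1 * s.2 : C) * (t.1 * t.2)))) :
    ∃ (R : HilbRep B) (ρ : C →⋆ₐ[ℂ] (R.H →L[ℂ] R.H)) (l : C → R.H),
      (∀ b c, Commute (R.π b) (ρ c)) ∧
      (∀ c b d, ρ c (R.π b (l d)) = R.π b (l (c * d))) ∧
      ∀ c d b, (inner ℂ (l c) (R.π b (l d))).re = κ (1, c) (1, d) b := by
  obtain ⟨R, e, hde, he⟩ := kernel_gns κ herm pos
  let val : unitary C × C → C := fun s => s.1 * s.2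
  have hnorm := norm_sq_combination R e val φ (fun s t z => by rw [he, hφ])
  have hnull : ∀ r, Finsupp.linearCombination ℂ val r = 0 →
      Finsupp.linearCombination ℂ e r = 0 := by
    intro r hr
    have := hnorm r
    rw [hr, mul_zero, map_zero] at this
    exact norm_eq_zero.1 (pow_eq_zero_iff two_ne_zero |>.1 this)
  let l : C → R.H := fun c => e (1, c)
  have hval1 : ∀ c, val (1, c) = c := fun c => one_mul c
  have hle : ∀ s, e s = l (val s) := by
    intro s
    have := hnull (Finsupp.single s 1 - Finsupp.single (1, val s) 1) (by simp [hval1])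
    simpa [sub_eq_zero] using this
  have hladd : ∀ c d, l (c + d) = l c + l d := by
    intro c d
    have := hnull (Finsupp.single (1, c + d) 1 - (Finsupp.single (1, c) 1 +
      Finsupp.single (1, d) 1)) (by simp [hval1])
    simpa [sub_eq_zero] using this
  have hlsmul : ∀ (z : ℂ) c, l (z • c) = z • l c := by
    intro z c
    have := hnull (Finsupp.single (1, z • c) 1 - Finsupp.single (1, c) z) (by simp [hval1])
    simpa [sub_eq_zero] using this
  have hd : DenseRange (Lam R l) := by
    refine Dense.mono ?_ hde
    rintro _ ⟨r, rfl⟩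
    refine ⟨r.mapDomain val, ?_⟩
    rw [Lam_apply, Lam_apply, Finsupp.sum_mapDomain_index (by simp) (by simp)]
    simp only [hle]
  -- `dep` makes left multiplication by a unitary an isometry on the vectors `π(b) ℓ d`
  have hU : ∀ v : unitary C, ∃ W : R.H →L[ℂ] R.H,
      (∀ b d, W (R.π b (l d)) = R.π b (l (v * d))) ∧ ∀ x, ‖W x‖ = ‖x‖ := by
    intro v
    obtain ⟨W, hW, hWn, -⟩ := exists_intertwiner R R l (fun d => l (v * d)) hd fun d c b => by
      have h1 : ∀ d, l (v * d) = e (v, d) := fun d => (hle (v, d)).symm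
      rw [h1, h1, he, he, dep v 1]
    exact ⟨W, hW, hWn⟩
  -- every element of `C` is a combination of unitaries
  have hex : ∀ c, ∃ T : R.H →L[ℂ] R.H, ∀ b d, T (R.π b (l d)) = R.π b (l (c * d)) := by
    intro c
    have hc : c ∈ Submodule.span ℂ (unitary C : Set C) := by
      rw [CStarAlgebra.span_unitary]
      trivial
    induction hc using Submodule.span_induction with
    | mem v hv =>
      obtain ⟨W, hW, -⟩ := hU ⟨v, hv⟩
      exact ⟨W, hW⟩
    | zero =>
      refine ⟨0, fun b d => ?_⟩
      have := hlsmul 0 0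
      rw [zero_smul, zero_smul] at this
      simp [this]
    | add c c' _ _ h h' =>
      obtain ⟨T, hT⟩ := h
      obtain ⟨T', hT'⟩ := h'
      exact ⟨T + T', fun b d => by rw [add_apply, hT, hT', add_mul, hladd, map_add]⟩
    | smul z c _ h =>
      obtain ⟨T, hT⟩ := h
      exact ⟨z • T, fun b d => by rw [smul_apply, hT, smul_mul_assoc, hlsmul, map_smul]⟩
  choose ρ hρ using hex
  have huniq : ∀ {T T' : R.H →L[ℂ] R.H},
      (∀ b d, T (R.π b (l d)) = T' (R.π b (l d))) → T = T' := fun h => eq_of_Lam_dense R l hd h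
  have hone : ρ 1 = 1 := huniq fun b d => by rw [hρ, one_mul, one_apply_eq_self]
  have hmul : ∀ c c', ρ (c * c') = ρ c * ρ c' := fun c c' => huniq fun b d => by
    rw [mul_apply_eq_comp, hρ, hρ, hρ, mul_assoc]
  have hadd : ∀ c c', ρ (c + c') = ρ c + ρ c' := fun c c' => huniq fun b d => by
    rw [add_apply, hρ, hρ, hρ, add_mul, hladd, map_add]
  have hsmul : ∀ (z : ℂ) c, ρ (z • c) = z • ρ c := fun z c => huniq fun b d => by
    rw [smul_apply, hρ, hρ, smul_mul_assoc, hlsmul, map_smul]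
  have hzero : ρ 0 = 0 := by simpa using hsmul 0 0
  have hstar : ∀ c, ρ (star c) = star (ρ c) := by
    intro c
    have hc : c ∈ Submodule.span ℂ (unitary C : Set C) := by
      rw [CStarAlgebra.span_unitary]
      trivial
    induction hc using Submodule.span_induction with
    | mem v hv =>
      obtain ⟨W, hW, hWn⟩ := hU ⟨v, hv⟩
      obtain rfl : ρ v = W := huniq fun b d => by rw [hρ, hW]
      have h1 : star (ρ v) * ρ v = 1 := by
        rw [ContinuousLinearMap.star_eq_adjoint]
        exact (ContinuousLinearMap.norm_map_iff_adjoint_comp_self (ρ v)).1 hWn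
      have h2 : ρ v * ρ (star v) = 1 := by
        rw [← hmul, Unitary.mul_star_self_of_mem hv, hone]
      exact (left_inv_eq_right_inv h1 h2).symm
    | zero => rw [star_zero, hzero, star_zero]
    | add c c' _ _ h h' => rw [star_add, hadd, hadd, star_add, h, h']
    | smul z c _ h => rw [star_smul, hsmul, hsmul, star_smul, h]
  let ρ' : C →⋆ₐ[ℂ] (R.H →L[ℂ] R.H) :=
    { toFun := ρ
      map_one' := hone
      map_mul' := hmul
      map_zero' := hzero
      map_add' := hadd
      commutes' := fun z => by
        rw [Algebra.algebraMap_eq_smul_one, hsmul, hone, Algebra.algebraMap_eq_smul_one]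
      map_star' := hstar }
  refine ⟨R, ρ', l, fun b c => ?_, hρ, ?_⟩
  · change R.π b * ρ c = ρ c * R.π b
    refine huniq fun b' d => ?_
    have h1 : ∀ x, R.π b (R.π b' x) = R.π (b * b') x := fun x => by
      rw [map_mul, mul_apply_eq_comp]
    rw [mul_apply_eq_comp, mul_apply_eq_comp, hρ, h1, h1, hρ]
  · intro c d b
    exact he _ _ _

end KernelRep

/-! ### Relative weak injectivity from the extension of kernels -/

/-- A state which almost attains the norm of `star Y * Y`. -/
theorem exists_state {M : Type} [CStarAlgebra M] (Y : M) {m : ℝ} (hm0 : 0 ≤ m) (hm : m < ‖Y‖) :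
    ∃ f : M →ₗ[ℝ] ℝ, (∀ x, f (star x) = f x) ∧ (∀ x, 0 ≤ f (star x * x)) ∧ f 1 = 1 ∧
      m ^ 2 ≤ f (star Y * Y) := by
  let _ := CStarAlgebra.spectralOrder M
  have _ := CStarAlgebra.spectralOrderedRing M
  -- the functional is obtained by separating `m² - Y* Y` from the positive cone
  let K : PointedCone ℝ M :=
    { carrier := {x | 0 ≤ x + star x}
      zero_mem' := by simp
      add_mem' := fun {x y} hx hy => by
        have : x + y + star (x + y) = (x + star x) + (y + star y) := by rw [star_add]; abel
        change 0 ≤ x + y + star (x + y)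
        rw [this]
        exact add_nonneg hx hy
      smul_mem' := fun c x hx => by
        change 0 ≤ (c : ℝ) • x + star ((c : ℝ) • x)
        rw [star_smul, star_trivial, ← smul_add]
        exact smul_nonneg c.2 hx }
  have hK : ∀ x, x ∈ K ↔ 0 ≤ x + star x := fun _ => Iff.rfl
  obtain ⟨f, hf, hf1, hfz⟩ := cone_separation K 1 ((m ^ 2) • 1 - star Y * Y)
    (by
      rw [hK, star_one]
      exact add_nonneg zero_le_one zero_le_one)
    (by
      intro y
      refine ⟨‖y + star y‖ / 2, ?_⟩
      have hs : IsSelfAdjoint (y + star y) := IsSelfAdjoint.add_star_self y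
      have := hs.neg_algebraMap_norm_le_self
      rw [neg_le_iff_add_nonneg', Algebra.algebraMap_eq_smul_one] at this
      rw [hK]
      convert this using 1
      rw [star_add, star_smul, star_one, star_trivial (‖y + star y‖ / 2)]
      module)
    (by
      rw [hK]
      intro h
      have h1 : star Y * Y ≤ algebraMap ℝ M (m ^ 2) := by
        rw [Algebra.algebraMap_eq_smul_one, ← sub_nonneg]
        have h2 := smul_nonneg (show (0 : ℝ) ≤ 1 / 2 by norm_num) h
        convert h2 using 1
        rw [star_sub, star_smul, star_one, star_mul, star_star, star_trivial (m ^ 2)]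
        module
      have h3 := (CStarAlgebra.norm_le_iff_le_algebraMap (star Y * Y) (sq_nonneg m)
        (star_mul_self_nonneg Y)).2 h1
      rw [CStarRing.norm_star_mul_self, ← sq] at h3
      nlinarith)
  refine ⟨f, fun x => ?_, fun x => ?_, hf1, ?_⟩
  · have h1 := hf (x - star x) (by rw [hK, star_sub, star_star]; simp)
    have h2 := hf (star x - x) (by rw [hK, star_sub, star_star]; simp)
    rw [map_sub] at h1 h2
    linarith
  · apply hf
    rw [hK, star_mul, star_star]
    exact add_nonneg (star_mul_self_nonneg x) (star_mul_self_nonneg x)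
  · rw [map_sub, map_smul, hf1, smul_eq_mul, mul_one] at hfz
    linarith

section RWIofExtend
open scoped Classical
variable {A B : Type} [CStarAlgebra A] [CStarAlgebra B]

/-- The value in `C` of a formal product `(v d)* (w c)`. -/
def qval {C : Type} [CStarAlgebra C] :
    C × C ⊕ (unitary C × C) × (unitary C × C) → C
  | Sum.inl (d, c) => star d * c
  | Sum.inr (s, t) => star (s.1 * s.2 : C) * (t.1 * t.2)

theorem qval_q {C : Type} [CStarAlgebra C] (s t : unitary C × C) :
    qval ((unitaryPairing (unitary C) C).q s t) = star (s.1 * s.2 : C) * (t.1 * t.2) := by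
  obtain ⟨v, d⟩ := s
  obtain ⟨w, c⟩ := t
  by_cases h : v = w
  · subst h
    have h1 : star (v : C) * (v * c) = c := by
      rw [← mul_assoc, Unitary.coe_star_mul_self, one_mul]
    simp [unitaryPairing, qval, mul_assoc, h1]
  · simp [unitaryPairing, qval, h]

/-- An inclusion along which all kernels on the directions given by products of unitaries and
elements of `C` extend, for every `C`, is relatively weakly injective: a representation of
`A ⊗ C` and a state yield such a kernel, and its extension yields a representation of
`B ⊗ C` whose restriction to `A ⊗ C` attains the same norms in the limit. -/
theorem rwi_of_extend (J : A →⋆ₐ[ℂ] B)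
    (hext : ∀ (C : Type) [CStarAlgebra C]
      (γ : C × C ⊕ (unitary C × C) × (unitary C × C) → A →ₗ[ℝ] ℝ),
      (∀ (V₀ : Finset (unitary C)) (D₀ : Finset C),
        IsKer (unitaryPairing (unitary C) C) (V₀ ×ˢ D₀) γ) →
      ∃ ψ : C × C ⊕ (unitary C × C) × (unitary C × C) → B →ₗ[ℝ] ℝ,
        (∀ (V₀ : Finset (unitary C)) (D₀ : Finset C),
          IsKer (unitaryPairing (unitary C) C) (V₀ ×ˢ D₀) ψ) ∧
        ∀ s t a, ψ ((unitaryPairing (unitary C) C).q s t) (J a) =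
          γ ((unitaryPairing (unitary C) C).q s t) a) : RWI J := by
  intro C _ y
  refine le_antisymm (maxNorm_le (maxNorm_nonneg _) fun q => ?_)
    (maxNorm_le (maxNorm_nonneg _) fun p => ?_)
  · let p : CommutingRepPair A C :=
      { carrier := q.carrier
        fst := q.fst.comp J
        snd := q.snd
        commutes := fun a c => q.commutes (J a) c }
    have e : ∀ y : A ⊗[ℂ] C, q.hom (tmap C J y) = p.hom y := by
      intro y
      induction y with
      | zero => rw [map_zero, map_zero, map_zero]
      | add y₁ y₂ h₁ h₂ => rw [map_add, map_add, map_add, h₁, h₂]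
      | tmul a c => rfl
    change ‖q.hom (tmap C J y)‖ ≤ _
    rw [e]
    exact p.norm_hom_le y
  · change _ ≤ maxNorm B C (tmap C J y)
    by_contra! hlt
    obtain ⟨m, hm1, hm2⟩ := exists_between hlt
    have hm0 : 0 ≤ m := (maxNorm_nonneg _).trans hm1.le
    obtain ⟨f, hfs, hfp, hf1, hfY⟩ := exists_state (p.hom y) hm0 hm2
    set P := unitaryPairing (unitary C) C with hP
    -- the kernel `γ (s, t) a = f (p(a ⊗ s* t))`
    let γ : C × C ⊕ (unitary C × C) × (unitary C × C) → A →ₗ[ℝ] ℝ := fun x =>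
      f ∘ₗ ((LinearMap.mulRight ℂ (p.snd (qval x))) ∘ₗ
        p.fst.toAlgHom.toLinearMap).restrictScalars ℝ
    have hγ : ∀ s t a, γ (P.q s t) a =
        f (p.fst a * p.snd (star (s.1 * s.2 : C) * (t.1 * t.2))) := by
      intro s t a
      rw [← qval_q]
      rfl
    have hcomm : ∀ (a b : A) (c d : C), p.fst (star a * b) * p.snd (star c * d) =
        star (p.fst a * p.snd c) * (p.fst b * p.snd d) := by
      intro a b c d
      rw [star_mul, ← map_star, ← map_star, map_mul, map_mul, mul_assoc, mul_assoc,
        ← mul_assoc (p.fst b), (p.commutes b (star c)).eq, mul_assoc, ← mul_assoc,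
        (p.commutes (star a) (star c)).eq, mul_assoc]
    have hker : ∀ (V₀ : Finset (unitary C)) (D₀ : Finset C), IsKer P (V₀ ×ˢ D₀) γ := by
      intro V₀ D₀
      constructor
      · intro s t a
        rw [hγ, hγ, ← hfs, star_mul, ← map_star, ← map_star, star_star, star_mul, star_star,
          (p.commutes _ _).eq]
      · intro r
        have := hfp (∑ s, p.fst (r s) * p.snd (s.1.1 * s.1.2 : C))
        rw [star_sum, Finset.sum_mul, map_sum] at this
        refine this.trans_eq (Finset.sum_congr rfl fun s _ => ?_)
        rw [Finset.mul_sum, map_sum]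
        refine Finset.sum_congr rfl fun t _ => ?_
        rw [hγ, hcomm]
    obtain ⟨ψ, hψ, hψJ⟩ := hext C γ hker
    have hcov : ∀ s : unitary C × C, s ∈ ({s.1} : Finset (unitary C)) ×ˢ ({s.2} : Finset C) := by
      intro s
      simp
    obtain ⟨R, ρ, l, hcom, hρ, hl⟩ := pair_of_kernel (fun s t => ψ (P.q s t))
      (by
        intro s t b
        exact (hψ {s.1, t.1} {s.2, t.2}).herm ⟨s, by simp⟩ ⟨t, by simp⟩ b)
      (by
        intro r
        let V₀ := r.support.image Prod.fst
        let D₀ := r.support.image Prod.snd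
        have hsub : r.support ⊆ V₀ ×ˢ D₀ := fun s hs => Finset.mem_product.2
          ⟨Finset.mem_image_of_mem _ hs, Finset.mem_image_of_mem _ hs⟩
        have := (hψ V₀ D₀).pos fun s => r s
        rw [Finset.sum_coe_sort (V₀ ×ˢ D₀) fun s => ∑ t : (V₀ ×ˢ D₀ : Finset _),
          ψ (P.q s t) (star (r s) * r t)] at this
        rw [Finsupp.sum_of_support_subset _ hsub _ (by simp)]
        refine this.trans_eq (Finset.sum_congr rfl fun s _ => ?_)
        rw [Finsupp.sum_of_support_subset _ hsub _ (by simp)]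
        exact Finset.sum_coe_sort (V₀ ×ˢ D₀) fun t => ψ (P.q s t) (star (r s) * r t))
      (by
        intro v w d c
        simp only [hP, unitaryPairing_q_same v w])
      (f ∘ₗ p.snd.toAlgHom.toLinearMap.restrictScalars ℝ)
      (by
        intro s t z
        have h1 : (z • 1 : B) = J (z • 1) := by rw [map_smul, map_one]
        have h2 : ∀ c, p.fst (z • 1) * p.snd c = p.snd (z • c) := by
          intro c
          rw [map_smul, map_smul, map_one, smul_mul_assoc, one_mul]
        change ψ (P.q s t) (z • 1) = f (p.snd _)
        rw [h1, hψJ, hγ, h2])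
    let q : CommutingRepPair B C :=
      { carrier := R.H →L[ℂ] R.H
        fst := R.π
        snd := ρ
        commutes := hcom }
    -- `Θ z` is the vector `z · ℓ 1`, of the same norm as the image of `z` in the GNS space of `f`
    let Θ : A ⊗[ℂ] C → R.H := fun z => (q.hom (tmap C J z) : R.H →L[ℂ] R.H) (l 1)
    have hΘadd : ∀ z w, Θ (z + w) = Θ z + Θ w := by
      intro z w
      simp only [Θ, map_add]
      rfl
    have hΘ0 : Θ 0 = 0 := by
      simp only [Θ, map_zero]
      rfl
    have hΘt : ∀ a c, Θ (a ⊗ₜ c) = R.π (J a) (l c) := by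
      intro a c
      change (R.π (J a) * ρ c) (l 1) = _
      have := hρ c 1 1
      rw [map_one, one_apply_eq_self, one_apply_eq_self, mul_one] at this
      rw [mul_apply_eq_comp, this]
    have hin : ∀ z w : A ⊗[ℂ] C, (inner ℂ (Θ z) (Θ w)).re = f (star (p.hom z) * p.hom w) := by
      intro z w
      induction z with
      | zero => simp [hΘ0]
      | add z₁ z₂ h₁ h₂ =>
        rw [hΘadd, inner_add_left, Complex.add_re, h₁, h₂, map_add, star_add, add_mul, map_add]
      | tmul a c =>
        induction w with
        | zero => simp [hΘ0]
        | add w₁ w₂ h₁ h₂ =>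
          rw [hΘadd, inner_add_right, Complex.add_re, h₁, h₂, map_add, mul_add, map_add]
        | tmul b d =>
          rw [hΘt, hΘt, HilbRep.inner_π, ← map_star, ← map_mul, hl, hψJ, hγ,
            CommutingRepPair.hom_tmul, CommutingRepPair.hom_tmul, ← hcomm]
          simp
    have hΘn : ∀ z, ‖Θ z‖ ^ 2 = f (star (p.hom z) * p.hom z) := by
      intro z
      rw [← hin, ← inner_self_eq_norm_sq (𝕜 := ℂ)]
      rfl
    have h1 : ‖l 1‖ ^ 2 = 1 := by
      have h2 : Θ 1 = l 1 := by
        simp only [Θ, map_one]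
        rfl
      rw [← h2, hΘn, map_one, star_one, one_mul, hf1]
    have h2 : ‖l 1‖ = 1 := (pow_eq_one_iff_of_nonneg (norm_nonneg _) two_ne_zero).1 h1
    have h3 : ‖Θ y‖ ≤ maxNorm B C (tmap C J y) := by
      refine (ContinuousLinearMap.le_opNorm _ _).trans ?_
      rw [h2, mul_one]
      exact q.norm_hom_le _
    have h4 := hΘn y
    have h5 : m ≤ ‖Θ y‖ := by
      rw [← h4] at hfY
      exact (sq_le_sq₀ hm0 (norm_nonneg _)).1 hfY
    linarith

end RWIofExtend

/-- If `(A i ⊆ B i)` is a family of relatively weakly injective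
inclusions of C*-algebras, then for any ultrafilter `U` the induced inclusion
`∏_U A_i ⊆ ∏_U B_i` of ultraproducts is also relatively weakly injective. -/
theorem rwi_ultraproduct (I : Type) (A B : I → Type)
    [∀ i, CStarAlgebra (A i)] [∀ i, CStarAlgebra (B i)]
    (j : ∀ i, A i →⋆ₐ[ℂ] B i) (hinj : ∀ i, Injective (j i)) (hrwi : ∀ i, RWI (j i))
    (U : Ultrafilter I)
    (A' : Type) [CStarAlgebra A'] (πA : (∀ i, A i) → A')
    (hA : IsCStarUltraproduct U A A' πA)
    (B' : Type) [CStarAlgebra B'] (πB : (∀ i, B i) → B')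
    (hB : IsCStarUltraproduct U B B' πB)
    (J : A' →⋆ₐ[ℂ] B')
    (hJ : ∀ f : ∀ i, A i, Bdd f → J (πA f) = πB fun i => j i (f i)) :
    RWI J := by
  classical
  refine rwi_of_extend J fun C _ γ hγ => ?_
  obtain ⟨ψ, hψ, hψJ⟩ := inf_extend (P := unitaryPairing (unitary C) C)
    (F := fun l : Finset (unitary C) × Finset C => l.1 ×ˢ l.2)
    (fun l l' h => Finset.product_subset_product (Prod.le_def.1 h).1 (Prod.le_def.1 h).2)
    (fun s => ⟨({s.1}, {s.2}), by simp⟩) J γ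
    (fun l y hy => kpair_nonneg_of_ultra hA hB hJ
      (fun i κ hκ => fin_extend (j i) (hrwi i) l.1 l.2 κ hκ) (hγ l.1 l.2) hy)
  exact ⟨ψ, fun V₀ D₀ => hψ (V₀, D₀), hψJ⟩

end
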